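/- arXiv:2101.00076 — 4 statements merged into one kernel-verified Lean document; each statement's English description precedes it below -/
import Mathlib

section
/- Let (X,T) be a minimal topological dynamical system and let d,k ∈ ℕ with k ≥ 2. If x, x_1, …, x_k ∈ X are such that (x, x_i) ∈ RP^[d](X) for every 1 ≤ i ≤ k, then the tuple (x_1, …, x_k) is k-regionally proximal of order d. -/
/-!
The proof runs in the Ellis semigroup `ellis T`, the pointwise closure of the powers of `T` in
`X → X`, and in the semigroups `cubeEllis T d K`, the closures of the maps
`(T ^ (n · ε + m κ))_{(ε, κ)}` with `n ∈ ℤ^d`, `m ∈ ℤ^K`, acting coordinatewise on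
`X ^ ({0,1}^d × K)`. Applied to a constant point `x`, the latter give the closure of its orbit, so
it is enough to find an element of `cubeEllis T d (Fin k)` that sends the constant point `x` to a
point with coordinate `xs i` at `(0, i)` and coordinate `x` at `(ε, i)` for all `ε ≠ 0`.

Fix a minimal left ideal of `ellis T` and an idempotent `u` in it with `u x = x`; for each `y`
there is an idempotent `v` in the same ideal with `v y = y`, and then `u v = u`, `v u = v`.

* The constant family `(u, …, u)` is again a minimal idempotent (`diag_minimal`): an idempotent
  `w` of the left ideal generated by `p (u, …, u)` satisfies `u w_j = u` in each coordinate, because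
  `w_j` lies in the minimal left ideal of `u`. This supplies inverses.
* If `(x, y) ∈ RP^[d]`, then a compactness argument provides `r` in `cubeEllis T d Bool` with
  `r x = (x, a, y, a)` for some `a` indexed by `ε ≠ 0`. Multiplying by suitable inverses gives `g`
  with `g x = (x, x, …, x, u y, x, …, x)` whose coordinate function at `(0, false)` is `u`
  (`exists_cube_element`).
* Reindexing `g` for `xs i` to `{0,1}^d × Fin k` (the value `true` at `i`, `false` elsewhere) and
  multiplying over `i` produces `u (xs i)` at `(0, i)` and `x` at all other vertices, since `u`
  fixes the points `u (xs j)` already obtained.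
* Acting by `v_i` on all vertices `(ε, i)` turns `u (xs i)` into `v_i u (xs i) = xs i`, and then the
  family equal to `u` at `ε ≠ 0` and to the identity at `ε = 0` restores
  `u v_i x = u x = x` at the vertices with `ε ≠ 0`. That family is a product, over the directions
  of the cube, of families equal to `u` on a face and to the identity off it.
-/


/-- The `n`-th iterate (`n : ℤ`) of a homeomorphism `T`. -/
def itZ {X : Type*} [TopologicalSpace X] (T : X ≃ₜ X) (n : ℤ) : X → X :=
  ⇑(T.toEquiv ^ n)

/-- `n⃗ · ε = ∑ i, n i * ε i` for `ε ∈ {0,1}^d`. -/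
def ndot {d : ℕ} (n : Fin d → ℤ) (ε : Fin d → Bool) : ℤ :=
  ∑ i, if ε i then n i else 0

/-- A topological dynamical system is minimal if every orbit is dense. -/
def IsMinimalSystem {X : Type*} [TopologicalSpace X] (T : X ≃ₜ X) : Prop :=
  ∀ x : X, Dense (Set.range fun n : ℤ => itZ T n x)

/-- The regionally proximal relation of order `d`. -/
def RP {X : Type*} [MetricSpace X] (d : ℕ) (T : X ≃ₜ X) (x y : X) : Prop :=
  ∀ δ > (0 : ℝ), ∃ x' y' : X, ∃ n : Fin d → ℤ,
    dist x x' < δ ∧ dist y y' < δ ∧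
      ∀ ε : Fin d → Bool, ε ≠ (fun _ => false) →
        dist (itZ T (ndot n ε) x') (itZ T (ndot n ε) y') < δ


namespace RPTuple

open Set Topology

/-! ### Closed subsemigroups and minimal left ideals -/

lemma closure_mul_mem {M : Type*} [Mul M] [TopologicalSpace M]
    (hr : ∀ r : M, Continuous fun p : M => p * r) {S : Set M}
    (hS : ∀ a ∈ S, ∀ b ∈ S, a * b ∈ S) (hl : ∀ a ∈ S, Continuous fun p : M => a * p)
    {p q : M} (hp : p ∈ closure S) (hq : q ∈ closure S) : p * q ∈ closure S := by
  have h1 : ∀ a ∈ S, a * q ∈ closure S := fun a ha =>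
    map_mem_closure (f := fun p => a * p) (hl a ha) hq fun b hb => hS a ha b hb
  have h2 : p * q ∈ closure (closure S) :=
    map_mem_closure (f := fun p => p * q) (hr q) hp fun a ha => h1 a ha
  rwa [closure_closure] at h2

/-- A compact right topological semigroup has a closed minimal left ideal: each of its elements is
a left multiple of each other one. -/
lemma exists_minimal_left_ideal {M : Type*} [Semigroup M] [TopologicalSpace M] [CompactSpace M]
    [T2Space M] (hr : ∀ r : M, Continuous fun p : M => p * r) {E : Set M} (hE : IsClosed E)
    (hne : E.Nonempty) (hmul : ∀ a ∈ E, ∀ b ∈ E, a * b ∈ E) :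
    ∃ L ⊆ E, IsClosed L ∧ L.Nonempty ∧ (∀ a ∈ E, ∀ b ∈ L, a * b ∈ L) ∧
      ∀ p ∈ L, ∀ r ∈ L, ∃ q ∈ E, r = q * p := by
  let F : Set (Set M) :=
    {L | L ⊆ E ∧ IsClosed L ∧ L.Nonempty ∧ ∀ a ∈ E, ∀ b ∈ L, a * b ∈ L}
  have hEF : E ∈ F := ⟨subset_rfl, hE, hne, hmul⟩
  obtain ⟨L, -, hL⟩ := zorn_superset_nonempty F (fun c hcF hc hcne => by
    refine ⟨⋂₀ c, ⟨?_, ?_, ?_, ?_⟩, fun s hs => sInter_subset_of_mem hs⟩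
    · obtain ⟨s, hs⟩ := hcne
      exact (sInter_subset_of_mem hs).trans (hcF hs).1
    · exact isClosed_sInter fun s hs => (hcF hs).2.1
    · have : Nonempty c := hcne.to_subtype
      exact IsCompact.nonempty_sInter_of_directed_nonempty_isCompact_isClosed
        (fun s hs t ht => (hc.total hs ht).elim (fun h => ⟨s, hs, subset_rfl, h⟩)
          fun h => ⟨t, ht, h, subset_rfl⟩) (fun s hs => (hcF hs).2.2.1)
        (fun s hs => (hcF hs).2.1.isCompact) (fun s hs => (hcF hs).2.1)
    · exact fun a ha b hb s hs => (hcF hs).2.2.2 a ha b (hb s hs)) E hEF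
  obtain ⟨hLE, hLc, hLne, hLi⟩ := hL.prop
  refine ⟨L, hLE, hLc, hLne, hLi, fun p hp r hrL => ?_⟩
  have hsub : (fun q => q * p) '' E ⊆ L := by
    rintro _ ⟨q, hq, rfl⟩
    exact hLi q hq p hp
  have hmem : (fun q => q * p) '' E ∈ F := by
    refine ⟨hsub.trans hLE, (hE.isCompact.image (hr p)).isClosed, hne.image _, ?_⟩
    rintro a ha _ ⟨q, hq, rfl⟩
    exact ⟨a * q, hmul a ha q hq, mul_assoc _ _ _⟩
  obtain ⟨q, hq, h⟩ := hL.le_of_le hmem hsub hrL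
  exact ⟨q, hq, h.symm⟩

/-! ### The Ellis semigroup and its cubical versions -/

/-- Self-maps of `X` carry the topology of pointwise convergence. -/
instance endTopology {X : Type*} [TopologicalSpace X] : TopologicalSpace (Function.End X) :=
  inferInstanceAs (TopologicalSpace (X → X))

instance endCompact {X : Type*} [TopologicalSpace X] [CompactSpace X] :
    CompactSpace (Function.End X) :=
  inferInstanceAs (CompactSpace (X → X))

instance endT2 {X : Type*} [TopologicalSpace X] [T2Space X] : T2Space (Function.End X) :=
  inferInstanceAs (T2Space (X → X))

lemma continuous_eval {X : Type*} [TopologicalSpace X] (x : X) :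
    Continuous fun p : Function.End X => p x :=
  continuous_apply (A := fun _ : X => X) x

lemma end_continuous_mul_right {X : Type*} [TopologicalSpace X] (r : Function.End X) :
    Continuous fun p : Function.End X => p * r :=
  continuous_pi (A := fun _ : X => X) fun x => continuous_eval (r x)

lemma end_continuous_mul_left {X : Type*} [TopologicalSpace X] {a : Function.End X}
    (ha : Continuous (a : X → X)) : Continuous fun p : Function.End X => a * p :=
  continuous_pi (A := fun _ : X => X) fun x => ha.comp (continuous_eval x)

/-- The iterate `T ^ n` as an element of the monoid of self-maps. -/
def iter {X : Type*} [TopologicalSpace X] (T : X ≃ₜ X) (n : ℤ) : Function.End X := itZ T n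

lemma iter_add {X : Type*} [TopologicalSpace X] (T : X ≃ₜ X) (m n : ℤ) :
    iter T (m + n) = iter T m * iter T n := by
  funext x
  change (T.toEquiv ^ (m + n)) x = (T.toEquiv ^ m) ((T.toEquiv ^ n) x)
  rw [zpow_add]; rfl

lemma iter_zero {X : Type*} [TopologicalSpace X] (T : X ≃ₜ X) : iter T 0 = 1 := by
  funext x
  change (T.toEquiv ^ (0 : ℤ)) x = x
  rw [zpow_zero]; rfl

lemma iter_continuous {X : Type*} [TopologicalSpace X] (T : X ≃ₜ X) (n : ℤ) :
    Continuous (iter T n : X → X) := by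
  have h1 : Continuous (iter T 1 : X → X) := by
    have : itZ T 1 = ⇑T := by
      change ⇑(T.toEquiv ^ (1 : ℤ)) = ⇑T
      rw [zpow_one]; rfl
    change Continuous (itZ T 1)
    rw [this]; exact T.continuous
  have h2 : Continuous (iter T (-1) : X → X) := by
    have : itZ T (-1) = ⇑T.symm := by
      change ⇑(T.toEquiv ^ (-1 : ℤ)) = ⇑T.symm
      rw [zpow_neg_one]; rfl
    change Continuous (itZ T (-1))
    rw [this]; exact T.symm.continuous
  induction n using Int.induction_on with
  | zero => rw [iter_zero]; exact continuous_id
  | succ i hi => rw [iter_add]; exact hi.comp h1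
  | pred i hi => rw [sub_eq_add_neg, iter_add]; exact hi.comp h2

/-- The Ellis semigroup of `(X, T)`. -/
def ellis {X : Type*} [TopologicalSpace X] (T : X ≃ₜ X) : Set (Function.End X) :=
  closure (range (iter T))

/-- The family `(T ^ (n · ε + m κ))` indexed by `(ε, κ) ∈ {0,1}^d × K`. -/
def cubeIter {X : Type*} [TopologicalSpace X] (T : X ≃ₜ X) {d : ℕ} {K : Type*}
    (n : Fin d → ℤ) (m : K → ℤ) : (Fin d → Bool) × K → Function.End X :=
  fun j => iter T (ndot n j.1 + m j.2)

/-- The enveloping semigroup of the action of `ℤ^d × ℤ^K` on `X ^ ({0,1}^d × K)` in which `(n, m)`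
acts by `T ^ (n · ε + m κ)` on the coordinate `(ε, κ)`. An element is recorded as the family of
its coordinate maps. -/
def cubeEllis {X : Type*} [TopologicalSpace X] (T : X ≃ₜ X) (d : ℕ) (K : Type*) :
    Set ((Fin d → Bool) × K → Function.End X) :=
  closure {p | ∃ (n : Fin d → ℤ) (m : K → ℤ), p = cubeIter T n m}

lemma ndot_add {d : ℕ} (n n' : Fin d → ℤ) (ε : Fin d → Bool) :
    ndot (n + n') ε = ndot n ε + ndot n' ε := by
  simp only [ndot, ← Finset.sum_add_distrib]
  exact Finset.sum_congr rfl fun i _ => by split_ifs <;> simp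

lemma ndot_zero {d : ℕ} (ε : Fin d → Bool) : ndot (0 : Fin d → ℤ) ε = 0 := by
  simp [ndot]

lemma ndot_false {d : ℕ} (n : Fin d → ℤ) : ndot n (fun _ => false) = 0 := by
  simp [ndot]

lemma ndot_single {d : ℕ} (i : Fin d) (a : ℤ) (ε : Fin d → Bool) :
    ndot (Pi.single i a) ε = if ε i then a else 0 := by
  rw [ndot, Finset.sum_eq_single i]
  · simp
  · intro b _ hb
    simp [Pi.single_eq_of_ne hb]
  · simp

lemma ellis_mul {X : Type*} [TopologicalSpace X] (T : X ≃ₜ X) :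
    ∀ p ∈ ellis T, ∀ q ∈ ellis T, p * q ∈ ellis T := by
  intro p hp q hq
  refine closure_mul_mem end_continuous_mul_right ?_ ?_ hp hq
  · rintro _ ⟨m, rfl⟩ _ ⟨n, rfl⟩
    exact ⟨m + n, iter_add T m n⟩
  · rintro _ ⟨m, rfl⟩
    exact end_continuous_mul_left (iter_continuous T m)

lemma cube_continuous_mul_right {X : Type*} [TopologicalSpace X] {J : Type*}
    (r : J → Function.End X) : Continuous fun p : J → Function.End X => p * r :=
  continuous_pi fun j => (end_continuous_mul_right (r j)).comp (continuous_apply j)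

lemma cubeEllis_mul {X : Type*} [TopologicalSpace X] (T : X ≃ₜ X) {d : ℕ} {K : Type*} :
    ∀ p ∈ cubeEllis T d K, ∀ q ∈ cubeEllis T d K, p * q ∈ cubeEllis T d K := by
  intro p hp q hq
  refine closure_mul_mem cube_continuous_mul_right ?_ ?_ hp hq
  · rintro _ ⟨n, m, rfl⟩ _ ⟨n', m', rfl⟩
    refine ⟨n + n', m + m', ?_⟩
    funext j
    simp only [cubeIter, Pi.mul_apply, Pi.add_apply, ndot_add, ← iter_add]
    congr 1
    ring
  · rintro _ ⟨n, m, rfl⟩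
    exact continuous_pi fun j =>
      (end_continuous_mul_left (iter_continuous T _)).comp (continuous_apply j)

lemma cubeEllis_one {X : Type*} [TopologicalSpace X] (T : X ≃ₜ X) {d : ℕ} {K : Type*} :
    (1 : (Fin d → Bool) × K → Function.End X) ∈ cubeEllis T d K := by
  refine subset_closure ⟨0, 0, ?_⟩
  funext j
  simp [cubeIter, ndot_zero, iter_zero]

lemma cubeEllis_apply {X : Type*} [TopologicalSpace X] (T : X ≃ₜ X) {d : ℕ} {K : Type*}
    {p : (Fin d → Bool) × K → Function.End X} (hp : p ∈ cubeEllis T d K)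
    (j : (Fin d → Bool) × K) : p j ∈ ellis T := by
  refine map_mem_closure (f := fun p : (Fin d → Bool) × K → Function.End X => p j)
    (continuous_apply j) hp ?_
  rintro _ ⟨n, m, rfl⟩
  exact ⟨_, rfl⟩

lemma cubeEllis_reindex {X : Type*} [TopologicalSpace X] (T : X ≃ₜ X) {d : ℕ} {K K' : Type*}
    (f : K' → K) {p : (Fin d → Bool) × K → Function.End X} (hp : p ∈ cubeEllis T d K) :
    (fun j : (Fin d → Bool) × K' => p (j.1, f j.2)) ∈ cubeEllis T d K' := by
  refine map_mem_closure (f := fun (p : (Fin d → Bool) × K → Function.End X)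
    (j : (Fin d → Bool) × K') => p (j.1, f j.2)) (continuous_pi fun j => continuous_apply _) hp ?_
  rintro _ ⟨n, m, rfl⟩
  exact ⟨n, m ∘ f, rfl⟩

/-- An element of the Ellis semigroup may act on an arbitrary set of copies of the cube. -/
lemma cubeEllis_on_copies {X : Type*} [TopologicalSpace X] (T : X ≃ₜ X) {d : ℕ} {K : Type*}
    (c : K → Bool) {p : Function.End X} (hp : p ∈ ellis T) :
    (fun j : (Fin d → Bool) × K => if c j.2 then p else 1) ∈ cubeEllis T d K := by
  refine map_mem_closure (f := fun (p : Function.End X)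
    (j : (Fin d → Bool) × K) => if c j.2 then p else 1) (continuous_pi fun j => ?_) hp ?_
  · split_ifs
    exacts [continuous_id, continuous_const]
  · rintro _ ⟨m, rfl⟩
    refine ⟨0, fun κ => if c κ then m else 0, ?_⟩
    funext j
    simp only [cubeIter, ndot_zero, zero_add]
    split_ifs
    exacts [rfl, (iter_zero T).symm]

lemma cubeEllis_diag {X : Type*} [TopologicalSpace X] (T : X ≃ₜ X) {d : ℕ} {K : Type*}
    {p : Function.End X} (hp : p ∈ ellis T) :
    (fun _ : (Fin d → Bool) × K => p) ∈ cubeEllis T d K := by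
  simpa using cubeEllis_on_copies T (d := d) (fun _ : K => true) hp

/-- An element of the Ellis semigroup may act on an upper face of the cube. -/
lemma cubeEllis_on_face {X : Type*} [TopologicalSpace X] (T : X ≃ₜ X) {d : ℕ} {K : Type*}
    (i : Fin d) {p : Function.End X} (hp : p ∈ ellis T) :
    (fun j : (Fin d → Bool) × K => if j.1 i then p else 1) ∈ cubeEllis T d K := by
  refine map_mem_closure (f := fun (p : Function.End X)
    (j : (Fin d → Bool) × K) => if j.1 i then p else 1) (continuous_pi fun j => ?_) hp ?_
  · split_ifs
    exacts [continuous_id, continuous_const]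
  · rintro _ ⟨m, rfl⟩
    refine ⟨Pi.single i m, 0, ?_⟩
    funext j
    simp only [cubeIter, ndot_single, Pi.zero_apply, add_zero]
    split_ifs
    exacts [rfl, (iter_zero T).symm]

/-- An idempotent `u` of the Ellis semigroup may act on all vertices `ε ≠ 0` simultaneously: take
the product of its actions on the `d` upper faces. -/
lemma cubeEllis_off_zero {X : Type*} [TopologicalSpace X] (T : X ≃ₜ X) {d : ℕ} {K : Type*}
    {u : Function.End X} (hu : u ∈ ellis T) (huu : u * u = u) :
    ∃ w ∈ cubeEllis T d K, (∀ κ, w (fun _ => false, κ) = 1) ∧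
      ∀ ε, ε ≠ (fun _ => false) → ∀ κ, w (ε, κ) = u := by
  have key : ∀ s : Finset (Fin d),
      (fun j : (Fin d → Bool) × K => if ∃ i ∈ s, j.1 i = true then u else 1) ∈
        cubeEllis T d K := by
    intro s
    induction s using Finset.induction_on with
    | empty =>
      simp only [Finset.notMem_empty, false_and, exists_false, if_false]
      exact cubeEllis_one T
    | insert i s _ ih =>
      convert cubeEllis_mul T _ (cubeEllis_on_face T (K := K) i hu) _ ih using 1
      funext j
      by_cases h1 : j.1 i = true <;> by_cases h2 : ∃ i ∈ s, j.1 i = true <;>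
        simp [h1, h2, huu]
  refine ⟨_, key Finset.univ, fun κ => by simp, fun ε hε κ => ?_⟩
  have : ∃ i, ε i = true := by
    by_contra! h
    exact hε (funext fun i => by simpa using h i)
  simpa using fun h => absurd this (by simpa using h)

/-! ### Minimal idempotents -/

/-- `u` is an idempotent of `ellis T` lying in a minimal left ideal: every left multiple of `u` can
be multiplied back to `u`. -/
structure IsMinIdem {X : Type*} [TopologicalSpace X] (T : X ≃ₜ X) (u : Function.End X) :
    Prop where
  mem : u ∈ ellis T
  idem : u * u = u
  back : ∀ p ∈ ellis T, ∃ q ∈ ellis T, q * p * u = u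

/-- In a minimal system there is, for each `x`, a minimal idempotent fixing `x`; moreover every
point `y` is fixed by an element of the same minimal left ideal. -/
lemma exists_minIdem {X : Type*} [MetricSpace X] [CompactSpace X] (T : X ≃ₜ X)
    (hmin : IsMinimalSystem T) (x : X) :
    ∃ u, IsMinIdem T u ∧ u x = x ∧
      ∀ y, ∃ v ∈ ellis T, v y = y ∧ u * v = u ∧ v * u = v := by
  obtain ⟨L, hLE, hLc, hLne, hLi, hLm⟩ := exists_minimal_left_ideal
    (M := Function.End X) end_continuous_mul_right (E := ellis T) isClosed_closure
    ⟨_, subset_closure ⟨0, rfl⟩⟩ (ellis_mul T)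
  have hid : ∀ y, ∃ v ∈ L, v y = y ∧ v * v = v := by
    intro y
    -- `L y` is closed and `T`-invariant, hence equal to `X`.
    have hcl : IsClosed ((fun p : Function.End X => p y) '' L) :=
      (hLc.isCompact.image (continuous_eval y)).isClosed
    have hy : y ∈ (fun p : Function.End X => p y) '' L := by
      obtain ⟨p, hp⟩ := hLne
      have hd := hmin (p y)
      have hsub : range (fun n : ℤ => itZ T n (p y)) ⊆ (fun p : Function.End X => p y) '' L := by
        rintro _ ⟨n, rfl⟩
        exact ⟨iter T n * p, hLi _ (subset_closure ⟨n, rfl⟩) p hp, rfl⟩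
      exact closure_minimal hsub hcl (hd y)
    obtain ⟨p, hp, hpy⟩ := hy
    obtain ⟨v, hv, hvv⟩ := exists_idempotent_in_compact_subsemigroup
      (M := Function.End X) end_continuous_mul_right
      (L ∩ {p | p y = y}) ⟨p, hp, hpy⟩
      (hLc.inter (isClosed_eq (continuous_eval y) continuous_const)).isCompact
      (fun a ha b hb => ⟨hLi a (hLE ha.1) b hb.1, by
        change a (b y) = y
        rw [show b y = y from hb.2]; exact ha.2⟩)
    exact ⟨v, hv.1, hv.2, hvv⟩
  obtain ⟨u, huL, hux, huu⟩ := hid x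
  refine ⟨u, ⟨hLE huL, huu, fun p hp => ?_⟩, hux, fun y => ?_⟩
  · obtain ⟨q, hq, h⟩ := hLm (p * u) (hLi p hp u huL) u huL
    exact ⟨q, hq, by rw [mul_assoc]; exact h.symm⟩
  · obtain ⟨v, hvL, hvy, hvv⟩ := hid y
    refine ⟨v, hLE hvL, hvy, ?_, ?_⟩
    · obtain ⟨q, -, h⟩ := hLm v hvL u huL
      rw [h, mul_assoc, hvv]
    · obtain ⟨q, -, h⟩ := hLm u huL v hvL
      rw [h, mul_assoc, huu]

/-- The constant family of a minimal idempotent is a minimal idempotent of `cubeEllis T d K`. -/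
lemma diag_minimal {X : Type*} [MetricSpace X] [CompactSpace X] (T : X ≃ₜ X) {d : ℕ} {K : Type*}
    {u : Function.End X} (hu : IsMinIdem T u) {p : (Fin d → Bool) × K → Function.End X}
    (hp : p ∈ cubeEllis T d K) :
    ∃ q ∈ cubeEllis T d K, ∀ j, q j * p j * u = u := by
  set U : (Fin d → Bool) × K → Function.End X := fun _ => u with hU
  have hUE : U ∈ cubeEllis T d K := cubeEllis_diag T hu.mem
  have hpU : p * U ∈ cubeEllis T d K := cubeEllis_mul T _ hp _ hUE
  obtain ⟨w, ⟨s, hs, hw⟩, hww⟩ := exists_idempotent_in_compact_subsemigroup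
    cube_continuous_mul_right ((fun q => q * (p * U)) '' cubeEllis T d K)
    ⟨_, _, cubeEllis_one T, rfl⟩
    ((isClosed_closure.isCompact).image (cube_continuous_mul_right _))
    (by
      rintro _ ⟨a, ha, rfl⟩ _ ⟨b, hb, rfl⟩
      exact ⟨a * (p * U) * b, cubeEllis_mul T _ (cubeEllis_mul T _ ha _ hpU) _ hb,
        mul_assoc _ _ _⟩)
  refine ⟨U * s, cubeEllis_mul T _ hUE _ hs, fun j => ?_⟩
  have hwj : w j = s j * p j * u := by
    rw [← hw]; simp [hU, mul_assoc]
  have hwwj : w j * w j = w j := congrFun hww j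
  obtain ⟨t, -, ht⟩ := hu.back (s j * p j)
    (ellis_mul T _ (cubeEllis_apply T hs j) _ (cubeEllis_apply T hp j))
  have ht' : t * w j = u := by rw [hwj, ← mul_assoc]; exact ht
  have : u * w j = u := by
    conv_lhs => rw [← ht', mul_assoc, hwwj]
    exact ht'
  calc (U * s) j * p j * u = u * w j := by rw [hwj]; simp [hU, mul_assoc]
    _ = u := this

/-! ### Regionally proximal pairs -/

lemma exists_of_RP {X : Type*} [MetricSpace X] [CompactSpace X] (T : X ≃ₜ X)
    (hmin : IsMinimalSystem T) {d : ℕ} {x y : X} (h : RP d T x y) :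
    ∃ r ∈ cubeEllis T d Bool, r (fun _ => false, false) x = x ∧
      r (fun _ => false, true) x = y ∧
      ∀ ε, ε ≠ (fun _ => false) → r (ε, true) x = r (ε, false) x := by
  have hev : ∀ j, Continuous fun r : (Fin d → Bool) × Bool → Function.End X => r j x :=
    fun j => (continuous_eval x).comp (continuous_apply j)
  -- The defect of `r`, which vanishes exactly on the elements sought.
  let Θ : ((Fin d → Bool) × Bool → Function.End X) → (Fin d → Bool) → ℝ := fun r ε =>
    if ε = (fun _ => false) then
      max (dist (r (fun _ => false, false) x) x) (dist (r (fun _ => false, true) x) y)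
    else dist (r (ε, true) x) (r (ε, false) x)
  have hΘ : Continuous Θ := by
    refine continuous_pi fun ε => ?_
    simp only [Θ]
    split_ifs
    · exact ((hev _).dist continuous_const).max ((hev _).dist continuous_const)
    · exact (hev _).dist (hev _)
  have hcl : IsClosed (Θ '' cubeEllis T d Bool) :=
    ((isClosed_closure.isCompact).image hΘ).isClosed
  have h0 : (0 : (Fin d → Bool) → ℝ) ∈ Θ '' cubeEllis T d Bool := by
    rw [← hcl.closure_eq, Metric.mem_closure_iff]
    intro δ hδ
    obtain ⟨x', y', n, hx', hy', hn⟩ := h δ hδ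
    -- By density of the orbit of `x`, both `x'` and `y'` may be taken in that orbit.
    let O : Set (X × X) := {z | dist z.1 x < δ ∧ dist z.2 y < δ ∧
      ∀ ε : Fin d → Bool, ε ≠ (fun _ => false) →
        dist (itZ T (ndot n ε) z.2) (itZ T (ndot n ε) z.1) < δ}
    have hO : IsOpen O := by
      have : O = {z | dist z.1 x < δ} ∩ ({z | dist z.2 y < δ} ∩
          ⋂ ε : Fin d → Bool, ⋂ _ : ε ≠ (fun _ => false),
            {z | dist (itZ T (ndot n ε) z.2) (itZ T (ndot n ε) z.1) < δ}) := by
        ext z; simp [O]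
      rw [this]
      have hc : ∀ k, Continuous (itZ T k) := iter_continuous T
      refine (isOpen_lt (by fun_prop) continuous_const).inter
        ((isOpen_lt (by fun_prop) continuous_const).inter
          (isOpen_iInter_of_finite fun ε => isOpen_iInter_of_finite fun _ =>
            isOpen_lt (((hc _).comp continuous_snd).dist ((hc _).comp continuous_fst))
              continuous_const))
    obtain ⟨⟨z, z'⟩, hz, ⟨l, rfl⟩, ⟨l', rfl⟩⟩ :=
      ((hmin x).prod (hmin x)).inter_open_nonempty O hO
        ⟨(x', y'), by rw [dist_comm]; exact hx', by rw [dist_comm]; exact hy',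
          fun ε hε => by rw [dist_comm]; exact hn ε hε⟩
    obtain ⟨h1, h2, h3⟩ := hz
    refine ⟨_, ⟨_, subset_closure ⟨n, fun b => if b then l' else l, rfl⟩, rfl⟩, ?_⟩
    rw [dist_pi_lt_iff hδ]
    intro ε
    by_cases hε : ε = fun _ => false
    · simp only [Θ, if_pos hε]
      change dist 0 (max (dist (iter T (ndot n (fun _ => false) + l) x) x)
        (dist (iter T (ndot n (fun _ => false) + l') x) y)) < δ
      rw [ndot_false, zero_add, zero_add, dist_comm, Real.dist_0_eq_abs,
        abs_of_nonneg (le_max_of_le_left dist_nonneg)]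
      exact max_lt h1 h2
    · simp only [Θ, if_neg hε]
      change dist 0 (dist (iter T (ndot n ε + l') x) (iter T (ndot n ε + l) x)) < δ
      rw [iter_add, iter_add, dist_comm, Real.dist_0_eq_abs, abs_of_nonneg dist_nonneg]
      exact h3 ε hε
  obtain ⟨r, hr, hr0⟩ := h0
  have hz := congrFun hr0 (fun _ => false)
  simp only [Θ, if_true, Pi.zero_apply] at hz
  refine ⟨r, hr, ?_, ?_, fun ε hε => ?_⟩
  · exact dist_le_zero.1 (hz ▸ le_max_left _ _)
  · exact dist_le_zero.1 (hz ▸ le_max_right _ _)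
  · have := congrFun hr0 ε
    simpa [Θ, hε] using this

/-- For a regionally proximal pair `(x, y)`, the point with coordinate `u y` at one vertex
`(0, true)` and `x` elsewhere is reached from the constant point `x` by an element that acts as the
idempotent `u` at the vertex `(0, false)`. -/
lemma exists_cube_element {X : Type*} [MetricSpace X] [CompactSpace X] (T : X ≃ₜ X)
    (hmin : IsMinimalSystem T) {d : ℕ} {x y : X} (h : RP d T x y) {u : Function.End X}
    (hu : IsMinIdem T u) (hux : u x = x) :
    ∃ g ∈ cubeEllis T d Bool, g (fun _ => false, false) = u ∧
      g (fun _ => false, true) x = u y ∧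
      ∀ ε, ε ≠ (fun _ => false) → ∀ b, g (ε, b) x = x := by
  obtain ⟨r, hr, hr0, hr1, hrε⟩ := exists_of_RP T hmin h
  have mul_ap : ∀ (a b : Function.End X) (z : X), (a * b) z = a (b z) := fun _ _ _ => rfl
  have huu := hu.idem
  have huE : ∀ K : Type, (fun _ => u) ∈ cubeEllis T d K := fun K => cubeEllis_diag T hu.mem
  -- `q` inverts the coordinates of `u r u` on the copy `false` of the cube.
  have hr' := cubeEllis_mul T _ (cubeEllis_mul T _ (huE Bool) _ hr) _ (huE Bool)
  obtain ⟨q, hq, hqr⟩ := diag_minimal T hu (cubeEllis_reindex T (fun _ : Unit => false) hr')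
  simp only [Pi.mul_apply] at hqr
  set q0 := q (fun _ => false, ()) with hq0
  obtain ⟨a, ha, haq⟩ := hu.back q0 (cubeEllis_apply T hq _)
  have hqx : ∀ ε, q (ε, ()) (u (r (ε, false) x)) = x := by
    intro ε
    have := congrFun (hqr (ε, ())) x
    simpa only [mul_ap, hux] using this
  have haqu : ∀ z, a (q0 (u z)) = u z := fun z => congrFun haq z
  have hax : a x = x := by
    have h1 := hqx (fun _ => false)
    rw [hr0, hux] at h1
    have h2 := haqu x
    rwa [hux, hq0, h1] at h2
  -- `g = u r₀ u` fixes `x`; its inverse `b` in the group of `u` normalizes the vertex `(0, false)`.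
  set g : Function.End X := u * r (fun _ => false, false) * u with hg
  have hgE : g ∈ ellis T :=
    ellis_mul T _ (ellis_mul T _ hu.mem _ (cubeEllis_apply T hr _)) _ hu.mem
  have hgx : g x = x := by
    simp only [hg, mul_ap, hux, hr0]
  have hug : u * g = g := by simp only [hg, ← mul_assoc, huu]
  have hgu : g * u = g := by simp only [hg, mul_assoc, huu]
  obtain ⟨h1, hh1, hh1g⟩ := hu.back g hgE
  set b : Function.End X := u * h1 * u with hb
  have hbE : b ∈ ellis T := ellis_mul T _ (ellis_mul T _ hu.mem _ hh1) _ hu.mem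
  have hbu : b * u = b := by simp only [hb, mul_assoc, huu]
  have hub : u * b = b := by simp only [hb, ← mul_assoc, huu]
  have hbg : b * g = u := by
    calc b * g = u * (h1 * (u * g)) := by simp only [hb, mul_assoc]
      _ = u * (h1 * g * u) := by rw [hug, mul_assoc h1, hgu]
      _ = u := by rw [hh1g, huu]
  obtain ⟨h2, hh2, hh2b⟩ := hu.back b hbE
  have hh2b' : h2 * b = u := by rw [← hh2b, mul_assoc, hbu]
  have hgb : g * b = u := by
    calc g * b = (h2 * b) * g * b := by rw [hh2b', hug]
      _ = h2 * (b * g) * b := by simp only [mul_assoc]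
      _ = u := by rw [hbg, mul_assoc, hub, hh2b']
  have hbx : b x = x := by
    have := congrFun hbg x
    rwa [mul_ap, hgx, hux] at this
  refine ⟨_, cubeEllis_mul T _ (cubeEllis_mul T _ (cubeEllis_mul T _
    (cubeEllis_diag T ha) _ (cubeEllis_reindex T (fun _ : Bool => ()) hq)) _ hr') _
    (cubeEllis_diag T hbE), ?_, ?_, ?_⟩
  · calc a * q0 * g * b = a * q0 * (u * g) * b := by rw [hug]
      _ = (a * q0 * u) * (g * b) := by simp only [mul_assoc]
      _ = u := by rw [haq, hgb, huu]
  · simp only [Pi.mul_apply, mul_ap, hbx, hux, hr1]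
    exact haqu y
  · intro ε hε c
    have : r (ε, c) x = r (ε, false) x := by
      cases c
      · rfl
      · exact hrε ε hε
    simp only [Pi.mul_apply, mul_ap, hbx, hux, this, hqx, hax]

end RPTuple

open RPTuple in
/-- If `(x, x i) ∈ RP^[d]` for all `1 ≤ i ≤ k`, then
`(x 1, …, x k)` is `k`-regionally proximal of order `d`. -/
theorem statement0 {X : Type*} [MetricSpace X] [CompactSpace X] (T : X ≃ₜ X)
    (hmin : IsMinimalSystem T) (d k : ℕ) (hd : 1 ≤ d) (hk : 2 ≤ k)
    (x : X) (xs : Fin k → X) (h : ∀ i : Fin k, RP d T x (xs i)) :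
    ∀ δ > (0 : ℝ), ∃ (xs' : Fin k → X) (n : Fin d → ℤ),
      (∀ i : Fin k, dist (xs i) (xs' i) < δ) ∧
        ∀ i j : Fin k, i < j → ∀ ε : Fin d → Bool, ε ≠ (fun _ => false) →
          dist (itZ T (ndot n ε) (xs' i)) (itZ T (ndot n ε) (xs' j)) < δ := by
  intro δ hδ
  have mul_ap : ∀ (a b : Function.End X) (z : X), (a * b) z = a (b z) := fun _ _ _ => rfl
  obtain ⟨u, hu, hux, huv⟩ := exists_minIdem T hmin x
  choose g hgE hg0 hg1 hgε using fun i => exists_cube_element T hmin (h i) hu hux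
  choose v hvE hv hvu hvu' using fun i => huv (xs i)
  -- Put `u (xs i)` at the vertices `(0, i)`, one `i` at a time.
  have step1 : ∀ s : Finset (Fin k), ∃ p ∈ cubeEllis T d (Fin k),
      (∀ i, p (fun _ => false, i) x = if i ∈ s then u (xs i) else x) ∧
        ∀ ε, ε ≠ (fun _ => false) → ∀ i, p (ε, i) x = x := by
    intro s
    induction s using Finset.induction_on with
    | empty => exact ⟨1, cubeEllis_one T, fun i => by simp; rfl, fun ε _ i => rfl⟩
    | insert a s has ih =>
      obtain ⟨p, hp, hp0, hpε⟩ := ih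
      refine ⟨_, cubeEllis_mul T _ (cubeEllis_reindex T (fun i : Fin k => decide (i = a))
        (hgE a)) _ hp, fun i => ?_, fun ε hε i => ?_⟩
      · simp only [Pi.mul_apply, mul_ap, hp0]
        by_cases hia : i = a
        · subst hia
          simp [has, hg1]
        · by_cases his : i ∈ s
          · have e : u (u (xs i)) = u (xs i) := congrFun hu.idem (xs i)
            simp [hia, his, hg0, e]
          · simp [hia, his, hg0, hux]
      · simp only [Pi.mul_apply, mul_ap, hpε ε hε, hgε a ε hε]
  obtain ⟨p, hp, hp0, hpε⟩ := step1 Finset.univ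
  -- Turn `u (xs i)` into `xs i`; the other vertices only need to remain in `u ⁻¹ {x}`.
  have step2 : ∀ s : Finset (Fin k), ∃ p ∈ cubeEllis T d (Fin k),
      (∀ i, p (fun _ => false, i) x = if i ∈ s then xs i else u (xs i)) ∧
        ∀ ε, ε ≠ (fun _ => false) → ∀ i, p (ε, i) x = if i ∈ s then v i x else x := by
    intro s
    induction s using Finset.induction_on with
    | empty => exact ⟨p, hp, fun i => by simp [hp0], fun ε hε i => by simp [hpε ε hε]⟩
    | insert a s has ih =>
      obtain ⟨p, hp, hp0, hpε⟩ := ih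
      refine ⟨_, cubeEllis_mul T _ (cubeEllis_on_copies T (fun i : Fin k => decide (i = a))
        (hvE a)) _ hp, fun i => ?_, fun ε hε i => ?_⟩
      · simp only [Pi.mul_apply, mul_ap, hp0]
        by_cases hia : i = a
        · subst hia
          have e : v i (u (xs i)) = xs i := (congrFun (hvu' i) (xs i)).trans (hv i)
          simpa [has] using e
        · simp [hia]; rfl
      · simp only [Pi.mul_apply, mul_ap, hpε ε hε]
        by_cases hia : i = a
        · subst hia
          simp [has]
        · simp [hia]; rfl
  obtain ⟨p', hp', hp'0, hp'ε⟩ := step2 Finset.univ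
  obtain ⟨w, hw, hw0, hwε⟩ := cubeEllis_off_zero T (d := d) (K := Fin k) hu.mem hu.idem
  have hP := cubeEllis_mul T _ hw _ hp'
  have hP0 : ∀ i, (w * p') (fun _ => false, i) x = xs i := by
    intro i
    have e := hp'0 i
    rw [if_pos (Finset.mem_univ i)] at e
    exact (congrArg (w (fun _ => false, i)) e).trans (congrFun (hw0 i) (xs i))
  have hPε : ∀ ε, ε ≠ (fun _ => false) → ∀ i, (w * p') (ε, i) x = x := by
    intro ε hε i
    have e := hp'ε ε hε i
    rw [if_pos (Finset.mem_univ i)] at e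
    exact ((congrArg (w (ε, i)) e).trans (congrFun (hwε ε hε i) (v i x))).trans
      ((congrFun (hvu i) x).trans hux)
  -- Approximate the coordinates of `(w * p') x` by those of a point in the orbit of `x`.
  have hopen : IsOpen {P : (Fin d → Bool) × Fin k → Function.End X |
      ∀ j, dist (P j x) ((w * p') j x) < δ / 2} := by
    simp only [Set.ofPred_forall]
    exact isOpen_iInter_of_finite fun j =>
      isOpen_lt (((continuous_eval x).comp (continuous_apply j)).dist continuous_const)
        continuous_const
  obtain ⟨_, hO, n, m, rfl⟩ := mem_closure_iff.1 hP _ hopen (fun j => by simpa using half_pos hδ)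
  have hO' : ∀ ε i, dist (itZ T (ndot n ε) (itZ T (m i) x)) ((w * p') (ε, i) x) < δ / 2 := by
    intro ε i
    have := hO (ε, i)
    simp only [cubeIter, iter_add] at this
    exact this
  refine ⟨fun i => itZ T (m i) x, n, fun i => ?_, fun i j _ ε hε => ?_⟩
  · have := hO (fun _ => false, i)
    simp only [cubeIter, ndot_false, zero_add, hP0] at this
    rw [dist_comm]
    exact this.trans (half_lt_self hδ)
  · have h1 := hO' ε i
    have h2 := hO' ε j
    rw [hPε ε hε] at h1 h2
    calc _ ≤ _ := dist_triangle_right _ _ x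
      _ < δ / 2 + δ / 2 := add_lt_add h1 h2
      _ = δ := add_halves δ
end

section
/- Let (X,T) be a minimal topological dynamical system, d ∈ ℕ, and x, y ∈ X with (x,y) ∈ RP^[d](X). Define y⃗ ∈ X^{{0,1}^{d+1}} by y⃗(ε) = y if ε = (0,…,0,1) and y⃗(ε) = x otherwise. Then y⃗ belongs to the closure of the F^[d+1]-orbit of the diagonal point x^[d+1]. -/
/-- The face transformation `T_j^[d]` acting on `X^{{0,1}^d}`:
it applies `T` in the coordinates `ε` with `ε j = 1`. -/
def faceTransform {X : Type*} [TopologicalSpace X] (d : ℕ) (T : X ≃ₜ X) (j : Fin d) :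
    Equiv.Perm ((Fin d → Bool) → X) :=
  Equiv.piCongrRight fun ε : Fin d → Bool =>
    if ε j = true then T.toEquiv else Equiv.refl X

/-- The face group `F^[d]`, generated by the face transformations. -/
def faceGroup {X : Type*} [TopologicalSpace X] (d : ℕ) (T : X ≃ₜ X) :
    Subgroup (Equiv.Perm ((Fin d → Bool) → X)) :=
  Subgroup.closure (Set.range (faceTransform d T))

/-- The closure of the `F^[d]`-orbit of a point of `X^{{0,1}^d}`. -/
def faceOrbitClosure {X : Type*} [TopologicalSpace X] (d : ℕ) (T : X ≃ₜ X)
    (xv : (Fin d → Bool) → X) : Set ((Fin d → Bool) → X) :=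
  closure {yv | ∃ S ∈ faceGroup d T, yv = S xv}

open Filter Topology

attribute [local instance] Ultrafilter.add Ultrafilter.addSemigroup

namespace FaceCube

/-! ### Iterates and face transformations -/

section Iterates

variable {X : Type*} [TopologicalSpace X] (T : X ≃ₜ X)

lemma itZ_zero (z : X) : itZ T 0 z = z := by simp [itZ]

lemma itZ_add (m n : ℤ) (z : X) : itZ T (m + n) z = itZ T m (itZ T n z) := by
  simp [itZ, zpow_add]

lemma continuous_itZ (n : ℤ) : Continuous (itZ T n) := by
  have h1 : ∀ k : ℕ, Continuous (itZ T (k : ℤ)) := by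
    intro k
    induction k with
    | zero => simpa [itZ] using continuous_id
    | succ k ih =>
      have : itZ T ((k + 1 : ℕ) : ℤ) = fun z => itZ T (k : ℤ) (T z) := by
        funext z
        rw [Nat.cast_succ, itZ_add]
        simp [itZ]
      rw [this]
      exact ih.comp T.continuous
  have h2 : ∀ k : ℕ, Continuous (itZ T (-(k : ℤ))) := by
    intro k
    induction k with
    | zero => simpa [itZ] using continuous_id
    | succ k ih =>
      have : itZ T (-((k + 1 : ℕ) : ℤ)) = fun z => itZ T (-(k : ℤ)) (T.symm z) := by
        funext z
        rw [Nat.cast_succ, neg_add, itZ_add]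
        congr 1
      rw [this]
      exact ih.comp T.symm.continuous
  rcases Int.eq_nat_or_neg n with ⟨k, rfl | rfl⟩
  · exact h1 k
  · exact h2 k

lemma ndot_add {d : ℕ} (m n : Fin d → ℤ) (ε : Fin d → Bool) :
    ndot (m + n) ε = ndot m ε + ndot n ε := by
  simp only [ndot, ← Finset.sum_add_distrib]
  refine Finset.sum_congr rfl fun i _ => ?_
  split_ifs <;> simp

lemma ndot_single {d : ℕ} (j : Fin d) (k : ℤ) (ε : Fin d → Bool) :
    ndot (Pi.single j k) ε = if ε j then k else 0 := by
  rw [ndot, Finset.sum_eq_single j]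
  · simp
  · intro i _ hij
    simp [Pi.single_eq_of_ne hij]
  · simp

lemma ndot_snoc {d : ℕ} (n : Fin d → ℤ) (a : ℤ) (ε : Fin (d + 1) → Bool) :
    ndot (Fin.snoc n a : Fin (d + 1) → ℤ) ε
      = ndot n (fun i => ε i.castSucc) + if ε (Fin.last d) then a else 0 := by
  simp [ndot, Fin.sum_univ_castSucc]

/-- The transformation of the cube space determined by `n ∈ ℤ^D`: it applies `T^{n·ε}` at the
vertex `ε`. -/
def cubeMap {D : ℕ} (n : Fin D → ℤ) (z : (Fin D → Bool) → X) : (Fin D → Bool) → X :=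
  fun ε => itZ T (ndot n ε) (z ε)

lemma cubeMap_add {D : ℕ} (m n : Fin D → ℤ) (z : (Fin D → Bool) → X) :
    cubeMap T (m + n) z = cubeMap T m (cubeMap T n z) := by
  funext ε
  simp [cubeMap, ndot_add, itZ_add]

lemma continuous_cubeMap {D : ℕ} (n : Fin D → ℤ) :
    Continuous (cubeMap T n : ((Fin D → Bool) → X) → _) :=
  continuous_pi fun ε => (continuous_itZ T _).comp (continuous_apply ε)

lemma faceTransform_zpow {D : ℕ} (j : Fin D) (k : ℤ) (z : (Fin D → Bool) → X) :
    (faceTransform D T j ^ k) z = cubeMap T (Pi.single j k) z := by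
  have key : ∀ z, faceTransform D T j z = cubeMap T (Pi.single j 1) z := by
    intro z
    funext ε
    by_cases h : ε j = true <;> simp [faceTransform, cubeMap, ndot_single, h, itZ]
  have z0 : ∀ z : (Fin D → Bool) → X, cubeMap T (Pi.single j 0) z = z := by
    intro z
    funext ε
    rw [cubeMap, ndot_single, ite_self, itZ_zero]
  induction k generalizing z with
  | zero => rw [z0, zpow_zero, Equiv.Perm.one_apply]
  | succ k ih =>
    rw [zpow_add_one, Equiv.Perm.mul_apply, ih, key, ← cubeMap_add, Pi.single_add]
  | pred k ih =>
    rw [zpow_sub_one, Equiv.Perm.mul_apply, ih]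
    have : (faceTransform D T j)⁻¹ z = cubeMap T (Pi.single j (-1)) z := by
      rw [Equiv.Perm.inv_eq_iff_eq, key, ← cubeMap_add, ← Pi.single_add,
        add_neg_cancel, z0]
    rw [this, ← cubeMap_add, ← Pi.single_add, sub_eq_add_neg]

lemma exists_faceGroup_eq_cubeMap {D : ℕ} (n : Fin D → ℤ) :
    ∃ S ∈ faceGroup D T, ∀ z : (Fin D → Bool) → X, S z = cubeMap T n z := by
  rw [← Finset.univ_sum_single n]
  refine Finset.sum_induction (fun j => (Pi.single j (n j) : Fin D → ℤ))
    (fun m => ∃ S ∈ faceGroup D T, ∀ z : (Fin D → Bool) → X, S z = cubeMap T m z) ?_ ?_ ?_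
  · rintro a b ⟨S, hS, hS'⟩ ⟨R, hR, hR'⟩
    exact ⟨S * R, mul_mem hS hR, fun z => by
      rw [Equiv.Perm.mul_apply, hR', hS', cubeMap_add]⟩
  · exact ⟨1, one_mem _, fun z => by funext ε; simp [cubeMap, ndot, itZ]⟩
  · intro j _
    exact ⟨faceTransform D T j ^ n j,
      zpow_mem (Subgroup.subset_closure (Set.mem_range_self j)) _, faceTransform_zpow T j (n j)⟩

/-- The closure of the set of all `(T^{n·ε} x)_ε`, `n ∈ ℤ^D`. -/
def cubeClosure (D : ℕ) (x : X) : Set ((Fin D → Bool) → X) :=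
  closure (Set.range fun n : Fin D → ℤ => cubeMap T n fun _ => x)

lemma cubeClosure_subset (D : ℕ) (x : X) :
    cubeClosure T D x ⊆ faceOrbitClosure D T fun _ => x := by
  refine closure_mono ?_
  rintro _ ⟨n, rfl⟩
  obtain ⟨S, hS, h⟩ := exists_faceGroup_eq_cubeMap T n
  exact ⟨S, hS, (h _).symm⟩

lemma cubeMap_mem {D : ℕ} {x : X} {z : (Fin D → Bool) → X} (hz : z ∈ cubeClosure T D x)
    (n : Fin D → ℤ) : cubeMap T n z ∈ cubeClosure T D x := by
  refine map_mem_closure (continuous_cubeMap T n) hz ?_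
  rintro _ ⟨m, rfl⟩
  exact ⟨n + m, cubeMap_add T n m _⟩

end Iterates

/-! ### Ultrafilters on abelian groups -/

section Ultra

variable {G H : Type*} [AddCommGroup G] [AddCommGroup H]

lemma pure_zero_add (V : Ultrafilter G) : pure 0 + V = V := by
  refine Ultrafilter.coe_inj.mp (Filter.ext fun s => ?_)
  have := Ultrafilter.eventually_add (pure 0) V (fun m => m ∈ s)
  simpa using this

lemma add_pure_zero (V : Ultrafilter G) : V + pure 0 = V := by
  refine Ultrafilter.coe_inj.mp (Filter.ext fun s => ?_)
  have := Ultrafilter.eventually_add V (pure 0) (fun m => m ∈ s)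
  simpa using this

lemma map_add (φ : G →+ H) (U V : Ultrafilter G) :
    (U + V).map φ = U.map φ + V.map φ := by
  refine Ultrafilter.coe_inj.mp (Filter.ext fun s => ?_)
  have h1 := Ultrafilter.eventually_add U V (fun m => φ m ∈ s)
  have h2 := Ultrafilter.eventually_add (U.map φ) (V.map φ) (fun m => m ∈ s)
  simp only [Ultrafilter.coe_map, eventually_map, ← _root_.map_add] at h2
  exact h1.trans h2.symm

/-- A nonempty closed left ideal of the semigroup of ultrafilters on `G`. -/
structure IsClosedLeftIdeal (L : Set (Ultrafilter G)) : Prop where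
  nonempty : L.Nonempty
  isClosed : IsClosed L
  add_mem : ∀ a, ∀ b ∈ L, a + b ∈ L

lemma isClosedLeftIdeal_range (r : Ultrafilter G) :
    IsClosedLeftIdeal (Set.range fun k : Ultrafilter G => k + r) where
  nonempty := ⟨r + r, r, rfl⟩
  isClosed := (isCompact_range (Ultrafilter.continuous_add_left r)).isClosed
  add_mem := by
    rintro a _ ⟨k, rfl⟩
    exact ⟨a + k, add_assoc _ _ _⟩

lemma exists_idempotent {S : Set (Ultrafilter G)} (hne : S.Nonempty) (hc : IsClosed S)
    (hadd : ∀ a ∈ S, ∀ b ∈ S, a + b ∈ S) : ∃ m ∈ S, m + m = m :=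
  exists_idempotent_in_compact_add_subsemigroup Ultrafilter.continuous_add_left S hne
    hc.isCompact hadd

variable (G) in
lemma exists_minimal_leftIdeal :
    ∃ L : Set (Ultrafilter G), Minimal IsClosedLeftIdeal L := by
  refine zorn_superset {L | IsClosedLeftIdeal L} fun c hcs hc => ?_
  rcases c.eq_empty_or_nonempty with rfl | hcne
  · exact ⟨Set.univ, ⟨⟨pure 0, trivial⟩, isClosed_univ, fun _ _ _ => trivial⟩, by simp⟩
  refine ⟨⋂₀ c, ⟨?_, isClosed_sInter fun s hs => (hcs hs).isClosed, ?_⟩,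
    fun s hs => Set.sInter_subset_of_mem hs⟩
  · exact IsCompact.nonempty_sInter_of_directed_nonempty_isCompact_isClosed (hS := hcne.to_subtype)
      (hSd := fun a ha b hb => (hc.total ha hb).elim
        (fun h => ⟨a, ha, subset_rfl, h⟩) fun h => ⟨b, hb, h, subset_rfl⟩) (hSn := fun s hs => (hcs hs).nonempty)
      (hSc := fun s hs => (hcs hs).isClosed.isCompact) (hScl := fun s hs => (hcs hs).isClosed)
  · intro a b hb s hs
    exact (hcs hs).add_mem a b (hb s hs)

/-- A minimal left ideal is generated by any of its elements. -/
lemma exists_add_eq {L : Set (Ultrafilter G)} (hL : Minimal IsClosedLeftIdeal L)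
    {a b : Ultrafilter G} (ha : a ∈ L) (hb : b ∈ L) : ∃ t, t + a = b := by
  have hsub : (Set.range fun k : Ultrafilter G => k + a) ⊆ L := by
    rintro _ ⟨k, rfl⟩
    exact hL.prop.add_mem k a ha
  exact hL.le_of_le (isClosedLeftIdeal_range a) hsub hb

/-- Idempotents of a minimal left ideal are right identities of it. -/
lemma add_idempotent {L : Set (Ultrafilter G)} (hL : Minimal IsClosedLeftIdeal L)
    {u f : Ultrafilter G} (hu : u ∈ L) (hf : f ∈ L) (hff : f + f = f) : u + f = u := by
  obtain ⟨t, rfl⟩ := exists_add_eq hL hf hu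
  rw [add_assoc, hff]

end Ultra

/-! ### Actions of ultrafilters -/

section Action

variable {X : Type*} [MetricSpace X] [CompactSpace X] (T : X ≃ₜ X)

/-- The action of `βℤ` on `X`: the limit of `T^n z` as `n → U`. -/
noncomputable def act (U : Ultrafilter ℤ) (z : X) : X := (U.map fun n => itZ T n z).lim

lemma tendsto_act (U : Ultrafilter ℤ) (z : X) :
    Tendsto (fun n => itZ T n z) U (𝓝 (act T U z)) :=
  (U.map fun n => itZ T n z).le_nhds_lim

lemma act_eq {U : Ultrafilter ℤ} {z a : X} (h : Tendsto (fun n => itZ T n z) U (𝓝 a)) :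
    act T U z = a :=
  tendsto_nhds_unique (tendsto_act T U z) h

lemma act_pure_zero (z : X) : act T (pure 0) z = z := by
  refine act_eq T ?_
  have := tendsto_pure_nhds (fun n => itZ T n z) (0 : ℤ)
  rwa [itZ_zero] at this

lemma act_add (U V : Ultrafilter ℤ) (z : X) : act T (U + V) z = act T U (act T V z) := by
  refine act_eq T ?_
  rw [tendsto_nhds]
  intro s hs hmem
  refine (Ultrafilter.eventually_add U V (fun n => itZ T n z ∈ s)).mpr ?_
  filter_upwards [(tendsto_act T U (act T V z)).eventually (hs.mem_nhds hmem)] with m hm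
  have hc := ((continuous_itZ T m).tendsto _).comp (tendsto_act T V z)
  filter_upwards [hc.eventually (hs.mem_nhds hm)] with n hn
  rw [itZ_add]
  exact hn

lemma continuous_act (z : X) : Continuous fun U : Ultrafilter ℤ => act T U z := by
  have hX : (fun U : Ultrafilter ℤ => act T U z) = Ultrafilter.extend fun n => itZ T n z := by
    funext U
    refine act_eq T ?_
    have h := ultrafilter_extend_eq_iff (f := fun n => itZ T n z) (b := U)
      (c := Ultrafilter.extend (fun n => itZ T n z) U)
    exact h.mp rfl
  rw [hX]
  exact continuous_ultrafilter_extend _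

/-- `n ↦ n·ε` as a homomorphism. -/
def dotHom {D : ℕ} (ε : Fin D → Bool) : (Fin D → ℤ) →+ ℤ :=
  AddMonoidHom.mk' (fun n => ndot n ε) fun m n => ndot_add m n ε

/-- The image of an ultrafilter on `ℤ^D` under `n ↦ n·ε`. -/
def proj {D : ℕ} (ε : Fin D → Bool) (U : Ultrafilter (Fin D → ℤ)) : Ultrafilter ℤ :=
  U.map (dotHom ε)

lemma proj_add {D : ℕ} (ε : Fin D → Bool) (U V : Ultrafilter (Fin D → ℤ)) :
    proj ε (U + V) = proj ε U + proj ε V :=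
  map_add (dotHom ε) U V

lemma map_const_zero {G : Type*} (U : Ultrafilter G) :
    U.map (fun _ => (0 : ℤ)) = pure 0 := by
  refine Ultrafilter.coe_inj.mp ?_
  simp [Filter.map_const]

lemma proj_zero {D : ℕ} (U : Ultrafilter (Fin D → ℤ)) : proj (fun _ => false) U = pure 0 := by
  rw [← map_const_zero U]
  unfold proj
  congr 1
  funext n
  simp [dotHom, ndot]

/-- The ultrafilter on `ℤ^D` carried by the `j`-th axis. -/
def axis {D : ℕ} (j : Fin D) (u : Ultrafilter ℤ) : Ultrafilter (Fin D → ℤ) :=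
  u.map fun k => Pi.single j k

lemma proj_axis {D : ℕ} (ε : Fin D → Bool) (j : Fin D) (u : Ultrafilter ℤ) :
    proj ε (axis j u) = if ε j then u else pure 0 := by
  rw [proj, axis, Ultrafilter.map_map]
  have : (dotHom ε : (Fin D → ℤ) → ℤ) ∘ (fun k => Pi.single j k)
      = fun k => if ε j then k else 0 := by
    funext k
    exact ndot_single j k ε
  rw [this]
  split_ifs
  · exact Ultrafilter.map_id' u
  · exact map_const_zero u

/-- The sum of copies of an idempotent `u` along the axes in `s` projects to `u` at the vertices with
a nonzero coordinate in `s`, and to the neutral element at the others. -/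
lemma exists_proj_eq {D : ℕ} {u : Ultrafilter ℤ} (hu : u + u = u) (s : Finset (Fin D)) :
    ∃ g : Ultrafilter (Fin D → ℤ), ∀ ε, ((∃ j ∈ s, ε j = true) → proj ε g = u) ∧
      ((¬ ∃ j ∈ s, ε j = true) → proj ε g = pure 0) := by
  induction s using Finset.induction_on with
  | empty =>
    refine ⟨pure 0, fun ε => ⟨by simp, fun _ => ?_⟩⟩
    simp [proj, Ultrafilter.map_pure]
  | insert j s _ ih =>
    obtain ⟨g, hg⟩ := ih
    refine ⟨axis j u + g, fun ε => ?_⟩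
    rw [proj_add, proj_axis]
    by_cases hj : ε j = true <;> by_cases hs : ∃ j ∈ s, ε j = true
    · simp [hj, (hg ε).1 hs, hu]
    · simp [hj, (hg ε).2 hs, add_pure_zero]
    · simp [hj, (hg ε).1 hs, pure_zero_add, hs]
    · simp only [hj, (hg ε).2 hs]
      simp only [Finset.mem_insert, exists_eq_or_imp, hj, hs]
      simp [pure_zero_add]

/-- The action of `β(ℤ^D)` on the cube space. -/
noncomputable def cubeAct {D : ℕ} (U : Ultrafilter (Fin D → ℤ)) (z : (Fin D → Bool) → X) :
    (Fin D → Bool) → X :=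
  fun ε => act T (proj ε U) (z ε)

lemma tendsto_cubeAct {D : ℕ} (U : Ultrafilter (Fin D → ℤ)) (z : (Fin D → Bool) → X) :
    Tendsto (fun n => cubeMap T n z) U (𝓝 (cubeAct T U z)) := by
  rw [tendsto_pi_nhds]
  intro ε
  exact (tendsto_act T (proj ε U) (z ε)).comp
    (show Tendsto (dotHom ε) (U : Filter (Fin D → ℤ)) (proj ε U : Filter ℤ) from le_rfl)

lemma cubeAct_mem {D : ℕ} {x : X} {z : (Fin D → Bool) → X} (hz : z ∈ cubeClosure T D x)
    (U : Ultrafilter (Fin D → ℤ)) : cubeAct T U z ∈ cubeClosure T D x :=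
  isClosed_closure.mem_of_tendsto (tendsto_cubeAct T U z)
    (Eventually.of_forall fun n => cubeMap_mem T hz n)

lemma exists_ultrafilter_tendsto {ι Z : Type*} [TopologicalSpace Z] {f : ι → Z} {z : Z}
    (hz : z ∈ closure (Set.range f)) : ∃ U : Ultrafilter ι, Tendsto f U (𝓝 z) := by
  have : (comap f (𝓝 z)).NeBot := by
    rw [comap_neBot_iff]
    intro t ht
    obtain ⟨_, h1, i, rfl⟩ := mem_closure_iff_nhds.mp hz t ht
    exact ⟨i, h1⟩
  exact ⟨Ultrafilter.of _, tendsto_iff_comap.mpr (Ultrafilter.of_le _)⟩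

lemma exists_cubeAct_eq {D : ℕ} {x : X} {z : (Fin D → Bool) → X} (hz : z ∈ cubeClosure T D x) :
    ∃ U, cubeAct T U (fun _ => x) = z := by
  obtain ⟨U, hU⟩ := exists_ultrafilter_tendsto hz
  exact ⟨U, tendsto_nhds_unique (tendsto_cubeAct T U _) hU⟩

/-! ### Minimality of the face orbit closure -/

/-- Every point of a minimal system is fixed by an idempotent of any given closed left ideal. -/
lemma exists_idempotent_fixing (hmin : IsMinimalSystem T) {L : Set (Ultrafilter ℤ)}
    (hL : IsClosedLeftIdeal L) (x : X) : ∃ u ∈ L, u + u = u ∧ act T u x = x := by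
  have hne : ({p | p ∈ L ∧ act T p x = x} : Set (Ultrafilter ℤ)).Nonempty := by
    obtain ⟨p, hp⟩ := hL.nonempty
    obtain ⟨U, hU⟩ := exists_ultrafilter_tendsto (hmin (act T p x) x)
    exact ⟨U + p, hL.add_mem U p hp, by rw [act_add]; exact act_eq T hU⟩
  have hcl : IsClosed ({p | p ∈ L ∧ act T p x = x} : Set (Ultrafilter ℤ)) :=
    hL.isClosed.inter (isClosed_eq (continuous_act T x) continuous_const)
  obtain ⟨u, ⟨hu, hux⟩, huu⟩ := exists_idempotent hne hcl (by
    rintro a ⟨_, ha'⟩ b ⟨hb, hb'⟩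
    exact ⟨hL.add_mem a b hb, by rw [act_add, hb', ha']⟩)
  exact ⟨u, hu, huu, hux⟩

lemma exists_true {D : ℕ} {ε : Fin D → Bool} (h : ε ≠ fun _ => false) : ∃ j, ε j = true := by
  by_contra! hc
  exact h (funext fun j => by simpa using hc j)

/-- The diagonal point lies in the orbit closure of every point of `cubeClosure T D x`. -/
lemma exists_cubeAct_eq_diag {L : Set (Ultrafilter ℤ)} (hL : Minimal IsClosedLeftIdeal L)
    {u : Ultrafilter ℤ} (hu : u ∈ L) (huu : u + u = u) {x : X} (hux : act T u x = x) {D : ℕ}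
    {z : (Fin D → Bool) → X} (hz : z ∈ cubeClosure T D x) :
    ∃ U, cubeAct T U z = fun _ => x := by
  obtain ⟨g, hg⟩ := exists_proj_eq huu (Finset.univ : Finset (Fin D))
  obtain ⟨h, rfl⟩ := exists_cubeAct_eq T hz
  obtain ⟨_, ⟨k, rfl⟩, hf⟩ := exists_idempotent (isClosedLeftIdeal_range (h + g)).nonempty
    (isClosedLeftIdeal_range (h + g)).isClosed
    fun a _ b hb => (isClosedLeftIdeal_range (h + g)).add_mem a b hb
  refine ⟨g + k, funext fun ε => ?_⟩
  by_cases h0 : ε = fun _ => false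
  · subst h0
    simp only [cubeAct, proj_zero, act_pure_zero]
  · obtain ⟨j, hj⟩ := exists_true h0
    have hgε : proj ε g = u := (hg ε).1 ⟨j, Finset.mem_univ j, hj⟩
    have hf' := congrArg (proj ε) hf
    simp only [proj_add, hgε] at hf'
    have hfL : proj ε k + (proj ε h + u) ∈ L :=
      hL.prop.add_mem _ _ (hL.prop.add_mem _ _ hu)
    have := congrArg (fun p => act T p x) (add_idempotent hL hu hfL hf')
    simp only [act_add, hux] at this
    simpa only [cubeAct, proj_add, act_add, hgε] using this

/-! ### Regionally proximal pairs -/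

/-- By density of the orbit of `x`, the points witnessing `RP^[d]` may be taken in this orbit. -/
lemma RP.exists_orbit {T : X ≃ₜ X} (hmin : IsMinimalSystem T) {d : ℕ} {x y : X}
    (hxy : RP d T x y) {δ : ℝ} (hδ : 0 < δ) :
    ∃ (n : Fin d → ℤ) (a b : ℤ), dist (itZ T a x) x < δ ∧ dist (itZ T b x) y < δ ∧
      ∀ ε : Fin d → Bool, ε ≠ (fun _ => false) →
        dist (itZ T (ndot n ε + a) x) (itZ T (ndot n ε + b) x) < δ := by
  obtain ⟨x', y', n, hx, hy, hn⟩ := hxy δ hδ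
  have hopen : IsOpen {p : X × X | dist p.1 x < δ ∧ dist p.2 y < δ ∧
      ∀ ε : Fin d → Bool, ε ≠ (fun _ => false) →
        dist (itZ T (ndot n ε) p.1) (itZ T (ndot n ε) p.2) < δ} := by
    refine (isOpen_lt (continuous_fst.dist continuous_const) continuous_const).inter
      ((isOpen_lt (continuous_snd.dist continuous_const) continuous_const).inter ?_)
    have hset : {p : X × X | ∀ ε : Fin d → Bool, ε ≠ (fun _ => false) →
        dist (itZ T (ndot n ε) p.1) (itZ T (ndot n ε) p.2) < δ} =
        ⋂ (ε : Fin d → Bool) (_ : ε ≠ fun _ => false),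
          {p : X × X | dist (itZ T (ndot n ε) p.1) (itZ T (ndot n ε) p.2) < δ} := by
      ext p
      simp
    change IsOpen {p : X × X | ∀ ε : Fin d → Bool, ε ≠ (fun _ => false) →
        dist (itZ T (ndot n ε) p.1) (itZ T (ndot n ε) p.2) < δ}
    rw [hset]
    refine isOpen_iInter_of_finite fun ε => isOpen_iInter_of_finite fun _ => ?_
    exact isOpen_lt (((continuous_itZ T _).comp continuous_fst).dist
      ((continuous_itZ T _).comp continuous_snd)) continuous_const
  have hmem : (x', y') ∈ {p : X × X | dist p.1 x < δ ∧ dist p.2 y < δ ∧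
      ∀ ε : Fin d → Bool, ε ≠ (fun _ => false) →
        dist (itZ T (ndot n ε) p.1) (itZ T (ndot n ε) p.2) < δ} :=
    ⟨by rwa [dist_comm], by rwa [dist_comm], hn⟩
  obtain ⟨p, ⟨⟨a, ha⟩, ⟨b, hb⟩⟩, hp⟩ :=
    ((hmin x).prod (hmin x)).exists_mem_open hopen ⟨_, hmem⟩
  obtain ⟨h1, h2, h3⟩ := hp
  simp only at ha hb
  refine ⟨n, a, b, ha ▸ h1, hb ▸ h2, fun ε hε => ?_⟩
  rw [itZ_add, itZ_add, ha, hb]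
  exact h3 ε hε

/-- The vertex `(0,…,0,1)`. -/
def lastVertex (d : ℕ) : Fin (d + 1) → Bool := fun i => decide ((i : ℕ) = d)

lemma lastVertex_last (d : ℕ) : lastVertex d (Fin.last d) = true := by simp [lastVertex]

lemma lastVertex_castSucc (d : ℕ) (i : Fin d) : lastVertex d i.castSucc = false := by
  simp [lastVertex, i.isLt.ne]

lemma eq_lastVertex {d : ℕ} {ε : Fin (d + 1) → Bool} (h1 : ε (Fin.last d) = true)
    (h2 : (fun i : Fin d => ε i.castSucc) = fun _ => false) : ε = lastVertex d := by
  funext i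
  refine Fin.lastCases ?_ (fun i => ?_) i
  · rw [h1, lastVertex_last]
  · rw [lastVertex_castSucc]
    exact congrFun h2 i

/-- A regionally proximal pair of order `d` yields two points of the closure of the face orbit
which differ at most at the vertex `(0,…,0,1)`, where they take the values `x` and `y`. -/
lemma RP.exists_pair {T : X ≃ₜ X} (hmin : IsMinimalSystem T) {d : ℕ} {x y : X}
    (hxy : RP d T x y) :
    ∃ A ∈ cubeClosure T (d + 1) x, ∃ B ∈ cubeClosure T (d + 1) x,
      A (lastVertex d) = x ∧ B (lastVertex d) = y ∧ ∀ ε, ε ≠ lastVertex d → A ε = B ε := by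
  have hpos : ∀ k : ℕ, (0 : ℝ) < 1 / ((k : ℝ) + 1) := fun k => Nat.one_div_pos_of_nat
  choose n a b hA hB hAB using fun k : ℕ => RP.exists_orbit hmin hxy (hpos k)
  set P : ℕ → (Fin (d + 1) → Bool) → X := fun k => cubeMap T (Fin.snoc (n k) (a k)) fun _ => x
  set Q : ℕ → (Fin (d + 1) → Bool) → X := fun k => cubeMap T (Fin.snoc (n k) (b k)) fun _ => x
  have hP : Tendsto P (hyperfilter ℕ) (𝓝 ((hyperfilter ℕ).map P).lim) :=
    ((hyperfilter ℕ).map P).le_nhds_lim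
  have hQ : Tendsto Q (hyperfilter ℕ) (𝓝 ((hyperfilter ℕ).map Q).lim) :=
    ((hyperfilter ℕ).map Q).le_nhds_lim
  have hδ : Tendsto (fun k : ℕ => 1 / ((k : ℝ) + 1)) (hyperfilter ℕ) (𝓝 0) :=
    tendsto_one_div_add_atTop_nhds_zero_nat.mono_left Nat.hyperfilter_le_atTop
  have hlast : ∀ (m : Fin d → ℤ) (c : ℤ),
      ndot (Fin.snoc m c : Fin (d + 1) → ℤ) (lastVertex d) = c := by
    intro m c
    rw [ndot_snoc, lastVertex_last]
    simp [lastVertex_castSucc, ndot]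
  refine ⟨_, isClosed_closure.mem_of_tendsto hP
      (Eventually.of_forall fun k => subset_closure ⟨_, rfl⟩),
    _, isClosed_closure.mem_of_tendsto hQ
      (Eventually.of_forall fun k => subset_closure ⟨_, rfl⟩), ?_, ?_, ?_⟩
  · refine tendsto_nhds_unique (tendsto_pi_nhds.mp hP (lastVertex d)) ?_
    refine tendsto_iff_dist_tendsto_zero.mpr
      (squeeze_zero (fun _ => dist_nonneg) (fun k => ?_) hδ)
    simp only [P, cubeMap, hlast]
    exact (hA k).le
  · refine tendsto_nhds_unique (tendsto_pi_nhds.mp hQ (lastVertex d)) ?_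
    refine tendsto_iff_dist_tendsto_zero.mpr
      (squeeze_zero (fun _ => dist_nonneg) (fun k => ?_) hδ)
    simp only [Q, cubeMap, hlast]
    exact (hB k).le
  · intro ε hε
    refine dist_eq_zero.mp (tendsto_nhds_unique
      ((tendsto_pi_nhds.mp hP ε).dist (tendsto_pi_nhds.mp hQ ε)) ?_)
    refine squeeze_zero (fun _ => dist_nonneg) (fun k => ?_) hδ
    simp only [P, Q, cubeMap, ndot_snoc]
    by_cases hl : ε (Fin.last d) = true
    · simp only [hl, if_true]
      exact (hAB k _ fun h0 => hε (eq_lastVertex hl h0)).le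
    · simp only [hl]
      simpa using (hpos k).le

lemma mem_cubeClosure {T : X ≃ₜ X} (hmin : IsMinimalSystem T) {d : ℕ} {x y : X}
    (hxy : RP d T x y) :
    (fun ε => if ε = lastVertex d then y else x) ∈ cubeClosure T (d + 1) x := by
  obtain ⟨L, hL⟩ := exists_minimal_leftIdeal ℤ
  obtain ⟨u, hu, huu, hux⟩ := exists_idempotent_fixing T hmin hL.prop x
  obtain ⟨w, hw, hww, hwy⟩ := exists_idempotent_fixing T hmin hL.prop y
  have huw : u + w = u := add_idempotent hL hu hw hww
  have hwu : w + u = w := add_idempotent hL hw hu huu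
  obtain ⟨A, hA, B, hB, hAx, hBy, hAB⟩ := RP.exists_pair hmin hxy
  obtain ⟨g, hg⟩ := exists_proj_eq huu (Finset.univ : Finset (Fin (d + 1)))
  obtain ⟨r, hr⟩ := exists_proj_eq huu (Finset.univ.image (Fin.castSucc : Fin d → Fin (d + 1)))
  obtain ⟨U, hU⟩ := exists_cubeAct_eq_diag T hL hu huu hux (cubeAct_mem T hA g)
  set q := proj (lastVertex d) U
  have hgl : proj (lastVertex d) g = u :=
    (hg _).1 ⟨Fin.last d, Finset.mem_univ _, lastVertex_last d⟩
  have hqx : act T q x = x := by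
    have := congrFun hU (lastVertex d)
    simpa only [cubeAct, hAx, hgl, hux] using this
  obtain ⟨t, ht⟩ := exists_add_eq hL (hL.prop.add_mem q u hu) hu
  have htx : act T t x = x := by
    have := congrArg (fun p => act T p x) ht
    simpa only [act_add, hux, hqx] using this
  have hwtq : act T w (act T t (act T q (act T u y))) = y := by
    have := congrArg (fun p => act T w (act T p y)) ht
    simp only [act_add] at this
    rw [this, ← act_add, hwu, hwy]
  have huwx : act T u (act T w x) = x := by rw [← act_add, huw, hux]
  have hmem := cubeAct_mem T (cubeAct_mem T (cubeAct_mem T (cubeAct_mem T hB g) U)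
    (axis (Fin.last d) (w + t))) r
  convert hmem using 1
  funext ε
  simp only [cubeAct, proj_axis]
  by_cases hε : ε = lastVertex d
  · subst hε
    have hrl : proj (lastVertex d) r = pure 0 := by
      refine (hr _).2 ?_
      rintro ⟨j, hj, hj'⟩
      obtain ⟨i, _, rfl⟩ := Finset.mem_image.mp hj
      simp [lastVertex_castSucc] at hj'
    simp only [hrl, act_pure_zero, lastVertex_last, if_true, hgl, hBy, act_add]
    exact hwtq.symm
  · have hx : act T (proj ε U) (act T (proj ε g) (B ε)) = x := by
      rw [← hAB ε hε]
      exact congrFun hU ε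
    rw [hx, if_neg hε]
    by_cases h0 : (fun i : Fin d => ε i.castSucc) = fun _ => false
    · -- Here `ε = 0`, since the only other vertex vanishing off the last index is excluded.
      have hl : ¬ ε (Fin.last d) = true := fun hl => hε (eq_lastVertex hl h0)
      have hr0 : proj ε r = pure 0 := by
        refine (hr _).2 ?_
        rintro ⟨j, hj, hj'⟩
        obtain ⟨i, _, rfl⟩ := Finset.mem_image.mp hj
        exact absurd (congrFun h0 i) (by simp [hj'])
      simp only [hr0, if_neg hl, act_pure_zero]
    · obtain ⟨i, hi⟩ := exists_true h0
      have hru : proj ε r = u :=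
        (hr ε).1 ⟨i.castSucc, Finset.mem_image_of_mem _ (Finset.mem_univ i), hi⟩
      rw [hru]
      split_ifs
      · rw [act_add, htx, huwx]
      · rw [act_pure_zero, hux]

end Action

end FaceCube

/-- If `(x,y) ∈ RP^[d]`, then the point of `X^{{0,1}^{d+1}}`
equal to `y` at `(0,…,0,1)` and to `x` elsewhere lies in the closure of the
`F^[d+1]`-orbit of the diagonal point `x^[d+1]`. -/
theorem statement1 {X : Type*} [MetricSpace X] [CompactSpace X] (T : X ≃ₜ X)
    (hmin : IsMinimalSystem T) (d : ℕ) (hd : 1 ≤ d) (x y : X) (hxy : RP d T x y) :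
    (fun ε : Fin (d + 1) → Bool =>
        if ε = (fun i : Fin (d+1) => decide ((i : ℕ) = d)) then y else x) ∈
      faceOrbitClosure (d + 1) T (fun _ => x) := by
  exact FaceCube.cubeClosure_subset T (d + 1) x (FaceCube.mem_cubeClosure hmin hxy)
end

section
/- Let (X,T) be a minimal topological dynamical system, d,k ∈ ℕ, and x, x_1, …, x_k ∈ X with (x, x_i) ∈ RP^[d](X) for 1 ≤ i ≤ k. For 1 ≤ i ≤ k let ω_i ∈ {0,1}^{d+k} be the element with ω_i(d+i) = 1 and all other coordinates 0, and let F = {ε ∈ {0,1}^{d+k} : Σ_{j=1}^{d} ε(j) > 0}. Then there exists y⃗ in the closure of the F^[d+k]-orbit of the diagonal point x^[d+k] such that y⃗(ω_i) = x_i for every 1 ≤ i ≤ k and y⃗(ε) = x for every ε ∈ F. -/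
namespace CubeFlow

/-! ### Enveloping semigroups of a flow and of its cubes -/

/-- A `ℤ`-flow sitting inside a right topological monoid: a homomorphism `t` from `ℤ` to a monoid
all of whose right translations are continuous, such that left translation by each `t n` is
continuous as well. The model is the monoid of all self-maps of `X` under composition, with the
topology of pointwise convergence and `t n = T ^ n`. -/
structure Flow (M : Type*) [Monoid M] [TopologicalSpace M] where
  t : ℤ → M
  t_zero : t 0 = 1
  t_add : ∀ m n, t (m + n) = t m * t n
  cont_right : ∀ r : M, Continuous (fun a : M => a * r)
  cont_left : ∀ n : ℤ, Continuous (fun a : M => t n * a)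

/-- In a right topological semigroup, the closure of a subsemigroup whose left translations are
continuous is a subsemigroup. -/
lemma mul_mem_closure {N : Type*} [Mul N] [TopologicalSpace N] {A : Set N}
    (hA : ∀ a ∈ A, ∀ b ∈ A, a * b ∈ A) (hr : ∀ r : N, Continuous (fun a : N => a * r))
    (hl : ∀ a ∈ A, Continuous (fun b : N => a * b)) {f g : N}
    (hf : f ∈ closure A) (hg : g ∈ closure A) : f * g ∈ closure A := by
  have h1 : ∀ a ∈ A, a * g ∈ closure A := fun a ha =>
    map_mem_closure (hl a ha) hg (fun b hb => hA a ha b hb)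
  have := map_mem_closure (hr g) hf h1
  rwa [closure_closure] at this

section Algebra

variable {M : Type*} [Monoid M] [TopologicalSpace M] (F : Flow M)
variable {ι κ : Type*} [Fintype ι] [Fintype κ]

/-- The enveloping semigroup (Ellis semigroup) of a flow. -/
def env : Set M := closure (Set.range F.t)

/-- The generators of the face group, evaluated at a vertex: the vertex `ε` of the cube is moved
by `t (m · ε)`. -/
def gen (m : ι → ℤ) : (ι → Bool) → M := fun ε => F.t (∑ i, if ε i then m i else 0)

variable (ι) in
/-- The enveloping semigroup of the face group acting on the cube with directions `ι`. -/
def cubeEnv : Set ((ι → Bool) → M) := closure (Set.range (gen F : (ι → ℤ) → _))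

omit [Fintype ι] in
lemma pi_cont_right (F : Flow M) (r : (ι → Bool) → M) :
    Continuous (fun a : (ι → Bool) → M => a * r) :=
  continuous_pi fun ε => (F.cont_right (r ε)).comp (continuous_apply ε)

lemma gen_add (m n : ι → ℤ) : gen F (m + n) = gen F m * gen F n := by
  funext ε
  simp only [gen, Pi.mul_apply, ← F.t_add, ← Finset.sum_add_distrib]
  congr 1
  refine Finset.sum_congr rfl fun i _ => ?_
  cases ε i <;> simp

lemma gen_cont_left (m : ι → ℤ) : Continuous (fun a : (ι → Bool) → M => gen F m * a) :=
  continuous_pi fun ε => (F.cont_left _).comp (continuous_apply ε)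

lemma t_mem_env (n : ℤ) : F.t n ∈ env F := subset_closure ⟨n, rfl⟩

lemma one_mem_env : (1 : M) ∈ env F := F.t_zero ▸ t_mem_env F 0

lemma env_mul {a b : M} (ha : a ∈ env F) (hb : b ∈ env F) : a * b ∈ env F := by
  refine mul_mem_closure ?_ F.cont_right ?_ ha hb
  · rintro _ ⟨m, rfl⟩ _ ⟨n, rfl⟩
    exact ⟨m + n, F.t_add m n⟩
  · rintro _ ⟨m, rfl⟩
    exact F.cont_left m

lemma gen_mem (m : ι → ℤ) : gen F m ∈ cubeEnv F ι := subset_closure ⟨m, rfl⟩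

lemma one_mem_cubeEnv : (1 : (ι → Bool) → M) ∈ cubeEnv F ι := by
  have : gen F (0 : ι → ℤ) = 1 := by
    funext ε
    simp [gen, F.t_zero]
  exact this ▸ gen_mem F 0

lemma cubeEnv_mul {a b : (ι → Bool) → M} (ha : a ∈ cubeEnv F ι) (hb : b ∈ cubeEnv F ι) :
    a * b ∈ cubeEnv F ι := by
  refine mul_mem_closure ?_ (pi_cont_right F) ?_ ha hb
  · rintro _ ⟨m, rfl⟩ _ ⟨n, rfl⟩
    exact ⟨m + n, gen_add F m n⟩
  · rintro _ ⟨m, rfl⟩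
    exact gen_cont_left F m

lemma cubeEnv_apply_mem {φ : (ι → Bool) → M} (h : φ ∈ cubeEnv F ι) (ε : ι → Bool) :
    φ ε ∈ env F :=
  map_mem_closure (f := fun φ : (ι → Bool) → M => φ ε) (continuous_apply ε) h (by rintro _ ⟨m, rfl⟩; exact ⟨_, rfl⟩)

lemma cubeEnv_apply_zero [T1Space M] {φ : (ι → Bool) → M} (h : φ ∈ cubeEnv F ι) :
    φ (fun _ => false) = 1 := by
  have := map_mem_closure (t := {(1 : M)}) (continuous_apply (fun _ : ι => false)) h
    (by rintro _ ⟨m, rfl⟩; simp [gen, F.t_zero])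
  simpa using this

/-- The vertex map `{0,1}^κ → {0,1}^ι` induced by a partial map `ι → κ`; undefined coordinates
are set to `0`. -/
def pull (e : ι → Option κ) (ε : κ → Bool) : ι → Bool := fun i => (e i).elim false ε

lemma cubeEnv_pull (e : ι → Option κ) {φ : (ι → Bool) → M} (h : φ ∈ cubeEnv F ι) :
    (fun ε => φ (pull e ε)) ∈ cubeEnv F κ := by
  classical
  refine map_mem_closure (f := fun (φ : (ι → Bool) → M) (ε : κ → Bool) => φ (pull e ε))
    (by fun_prop) h ?_
  rintro _ ⟨m, rfl⟩
  refine ⟨fun k => ∑ i, if e i = some k then m i else 0, ?_⟩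
  funext ε
  simp only [gen]
  congr 1
  calc ∑ k, (if ε k = true then ∑ i, (if e i = some k then m i else 0) else 0)
      = ∑ k, ∑ i, (if ε k = true then (if e i = some k then m i else 0) else 0) := by
        refine Finset.sum_congr rfl fun k _ => ?_
        split_ifs <;> simp
    _ = ∑ i, ∑ k, (if ε k = true then (if e i = some k then m i else 0) else 0) :=
        Finset.sum_comm
    _ = _ := by
        refine Finset.sum_congr rfl fun i _ => ?_
        cases hi : e i with
        | none => simp [pull, hi]
        | some k₀ =>
          rw [Finset.sum_eq_single k₀]
          · simp [pull, hi]
          · intro b _ hb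
            simp [Ne.symm hb]
          · simp

lemma face_mem (j : ι) {f : M} (hf : f ∈ env F) :
    (fun ε : ι → Bool => if ε j then f else 1) ∈ cubeEnv F ι := by
  classical
  refine map_mem_closure (f := fun (f : M) (ε : ι → Bool) => if ε j then f else 1) ?_ hf ?_
  · refine continuous_pi fun ε => ?_
    split_ifs <;> fun_prop
  · rintro _ ⟨n, rfl⟩
    refine ⟨fun i => if i = j then n else 0, ?_⟩
    funext ε
    simp only [gen]
    rw [Finset.sum_eq_single j]
    · cases ε j <;> simp [F.t_zero]
    · intro b _ hb
      simp [hb]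
    · simp

open Classical in
/-- The cube element equal to `p` away from the vertex `0`, and to `1` at the vertex `0`. -/
noncomputable def offZero (p : M) : (ι → Bool) → M := fun ε => if ∃ i, ε i = true then p else 1

omit [TopologicalSpace M] in
lemma offZero_of {p : M} {ε : ι → Bool} (h : ∃ i, ε i = true) : offZero p ε = p := if_pos h

omit [TopologicalSpace M] in
lemma offZero_zero {p : M} : offZero p (fun _ : ι => false) = 1 := if_neg (by simp)

omit [Fintype ι] in
lemma eq_zero_or (ε : ι → Bool) : ε = (fun _ => false) ∨ ∃ i, ε i = true := by
  by_cases h : ∃ i, ε i = true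
  · exact Or.inr h
  · left
    funext i
    simpa using fun hi => h ⟨i, hi⟩

lemma offZero_mem {p : M} (hp : p ∈ env F) (hpp : p * p = p) :
    (offZero p : (ι → Bool) → M) ∈ cubeEnv F ι := by
  classical
  have key : ∀ J : Finset ι,
      (fun ε : ι → Bool => if ∃ i ∈ J, ε i = true then p else 1) ∈ cubeEnv F ι := by
    intro J
    induction J using Finset.induction_on with
    | empty =>
      convert one_mem_cubeEnv (ι := ι) F using 1
      funext ε
      simp
    | insert j J _ ih =>
      convert cubeEnv_mul F (face_mem F j hp) ih using 1
      funext ε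
      by_cases h1 : ε j = true <;> by_cases h2 : ∃ i ∈ J, ε i = true <;>
        simp [h1, h2, hpp]
  convert key Finset.univ using 1
  funext ε
  simp [offZero]

/-! ### Minimal left ideals and their idempotents -/

/-- `L` is a closed left ideal of the enveloping semigroup that is generated by each of its
elements, that is, a minimal left ideal. -/
structure IsMinIdeal (L : Set M) : Prop where
  sub : L ⊆ env F
  nonempty : L.Nonempty
  closed : IsClosed L
  mul_mem : ∀ e ∈ env F, ∀ l ∈ L, e * l ∈ L
  trans : ∀ l ∈ L, ∀ l' ∈ L, ∃ e ∈ env F, e * l = l'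

lemma exists_isMinIdeal [CompactSpace M] [T2Space M] : ∃ L : Set M, IsMinIdeal F L := by
  let C : Set (Set M) :=
    {L | L ⊆ env F ∧ L.Nonempty ∧ IsClosed L ∧ ∀ e ∈ env F, ∀ l ∈ L, e * l ∈ L}
  obtain ⟨L, hL⟩ : ∃ L, Minimal (· ∈ C) L := by
    refine zorn_superset _ fun c hcs hc => ?_
    rcases c.eq_empty_or_nonempty with rfl | hne
    · exact ⟨env F, ⟨subset_rfl, ⟨1, one_mem_env F⟩, isClosed_closure,
        fun e he l hl => env_mul F he hl⟩, by simp⟩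
    refine ⟨⋂₀ c, ⟨?_, ?_, ?_, ?_⟩, fun s hs => Set.sInter_subset_of_mem hs⟩
    · obtain ⟨s, hs⟩ := hne
      exact (Set.sInter_subset_of_mem hs).trans (hcs hs).1
    · rw [Set.sInter_eq_iInter]
      have := hne.coe_sort
      exact IsCompact.nonempty_iInter_of_directed_nonempty_isCompact_isClosed
        (fun s : c => (s : Set M)) (DirectedOn.directed_val (IsChain.directedOn hc.symm))
        (fun s => (hcs s.2).2.1) (fun s => (hcs s.2).2.2.1.isCompact) (fun s => (hcs s.2).2.2.1)
    · exact isClosed_sInter fun s hs => (hcs hs).2.2.1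
    · intro e he l hl s hs
      exact (hcs hs).2.2.2 e he l (hl s hs)
  obtain ⟨⟨h1, h2, h3, h4⟩, hmin⟩ := hL
  refine ⟨L, h1, h2, h3, h4, fun l hl k hk => ?_⟩
  -- `E * l` is a closed left ideal inside `L`, hence equals `L`.
  have hsub : (fun e => e * l) '' env F ⊆ L := by
    rintro _ ⟨e, he, rfl⟩
    exact h4 e he l hl
  have hmem : (fun e => e * l) '' env F ∈ C := by
    refine ⟨hsub.trans h1, ⟨_, 1, one_mem_env F, rfl⟩, ?_, ?_⟩
    · exact (isClosed_closure.isCompact.image (F.cont_right l)).isClosed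
    · rintro e he _ ⟨f, hf, rfl⟩
      exact ⟨e * f, env_mul F he hf, mul_assoc _ _ _⟩
  exact hmin hmem hsub hk

variable {F} {L : Set M}

/-- An idempotent of a minimal left ideal is a right identity of that ideal. -/
lemma IsMinIdeal.mul_idem (hL : IsMinIdeal F L) {l p : M} (hl : l ∈ L) (hp : p ∈ L)
    (hpp : p * p = p) : l * p = l := by
  obtain ⟨e, -, rfl⟩ := hL.trans p hp l hl
  rw [mul_assoc, hpp]

/-- For an idempotent `p` of a minimal left ideal `L`, the set `p * L` is a group. -/
lemma IsMinIdeal.exists_inv (hL : IsMinIdeal F L) {p : M} (hp : p ∈ L) (hpp : p * p = p) {a : M}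
    (ha : a ∈ L) (hpa : p * a = a) : ∃ b ∈ L, p * b = b ∧ b * a = p ∧ a * b = p := by
  have left : ∀ a ∈ L, p * a = a → ∃ b ∈ L, p * b = b ∧ b * a = p := by
    intro a ha hpa
    obtain ⟨w, hw, hwa⟩ := hL.trans a ha p hp
    refine ⟨p * w * p, hL.mul_mem _ (env_mul F (hL.sub hp) hw) p hp, ?_, ?_⟩
    · rw [← mul_assoc, ← mul_assoc, hpp]
    · rw [mul_assoc, hpa, mul_assoc, hwa, hpp]
  obtain ⟨b, hb, hpb, hba⟩ := left a ha hpa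
  obtain ⟨c, hc, hpc, hcb⟩ := left b hb hpb
  refine ⟨b, hb, hpb, hba, ?_⟩
  calc a * b = p * (a * b) := by rw [← mul_assoc, hpa]
    _ = c * (b * a) * b := by rw [← hcb]; simp only [mul_assoc]
    _ = p := by rw [hba, mul_assoc, hpb, hcb]

/-- Every element of the cube semigroup is invertible modulo `offZero p`. -/
lemma exists_cube_inv [CompactSpace M] [T2Space M] (hL : IsMinIdeal F L) {p : M} (hp : p ∈ L)
    (hpp : p * p = p) {φ : (ι → Bool) → M} (hφ : φ ∈ cubeEnv F ι) :
    ∃ χ ∈ cubeEnv F ι, offZero p * χ * φ * offZero p = offZero p := by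
  have hu : (offZero p : (ι → Bool) → M) ∈ cubeEnv F ι := offZero_mem F (hL.sub hp) hpp
  obtain ⟨v, ⟨χ, hχ, rfl⟩, hv⟩ := exists_idempotent_in_compact_subsemigroup (pi_cont_right F)
    ((fun χ => χ * (φ * offZero p)) '' cubeEnv F ι) ⟨_, 1, one_mem_cubeEnv F, rfl⟩
    (isClosed_closure.isCompact.image (pi_cont_right F _))
    (by
      rintro _ ⟨a, ha, rfl⟩ _ ⟨b, hb, rfl⟩
      exact ⟨a * (φ * offZero p) * b, cubeEnv_mul F (cubeEnv_mul F ha (cubeEnv_mul F hφ hu)) hb,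
        by simp only [mul_assoc]⟩)
  refine ⟨χ, hχ, ?_⟩
  funext ε
  rcases eq_zero_or ε with rfl | hε
  · simp [offZero_zero, cubeEnv_apply_zero F hχ, cubeEnv_apply_zero F hφ]
  · have h1 : χ ε * (φ ε * p) ∈ L := hL.mul_mem _ (cubeEnv_apply_mem F hχ ε) _
      (hL.mul_mem _ (cubeEnv_apply_mem F hφ ε) _ hp)
    have h2 := congrFun hv ε
    simp only [Pi.mul_apply, offZero_of hε] at h2 ⊢
    have := hL.mul_idem hp h1 h2
    simpa only [mul_assoc] using this

/-! ### The group of compressed cube elements -/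

variable (F ι) in
/-- The cube elements of the form `ε ↦ p * φ ε * p` with `φ` in the cube semigroup. -/
def compressed (p : M) : Set ((ι → Bool) → M) := {ν | ∃ φ ∈ cubeEnv F ι, ν = fun ε => p * φ ε * p}

lemma comp_pull (e : ι → Option κ) {p : M} {ν : (ι → Bool) → M} (h : ν ∈ compressed F ι p) :
    (fun ε => ν (pull e ε)) ∈ compressed F κ p := by
  obtain ⟨φ, hφ, rfl⟩ := h
  exact ⟨_, cubeEnv_pull F e hφ, rfl⟩

lemma comp_left {p : M} (hpp : p * p = p) {ν : (ι → Bool) → M} (h : ν ∈ compressed F ι p)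
    (ε : ι → Bool) : p * ν ε = ν ε := by
  obtain ⟨φ, hφ, rfl⟩ := h
  simp only [← mul_assoc, hpp]

lemma comp_right {p : M} (hpp : p * p = p) {ν : (ι → Bool) → M} (h : ν ∈ compressed F ι p)
    (ε : ι → Bool) : ν ε * p = ν ε := by
  obtain ⟨φ, hφ, rfl⟩ := h
  simp only [mul_assoc, hpp]

lemma comp_mul [T1Space M] {p : M} (hp : p ∈ env F) (hpp : p * p = p) {ν ν' : (ι → Bool) → M}
    (h : ν ∈ compressed F ι p) (h' : ν' ∈ compressed F ι p) : ν * ν' ∈ compressed F ι p := by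
  obtain ⟨φ, hφ, rfl⟩ := h
  obtain ⟨ψ, hψ, rfl⟩ := h'
  refine ⟨φ * offZero p * ψ, cubeEnv_mul F (cubeEnv_mul F hφ (offZero_mem F hp hpp)) hψ, ?_⟩
  funext ε
  rcases eq_zero_or ε with rfl | hε
  · simp [offZero_zero, cubeEnv_apply_zero F hφ, cubeEnv_apply_zero F hψ, hpp]
  · simp only [Pi.mul_apply, offZero_of hε]
    calc p * φ ε * p * (p * ψ ε * p) = p * φ ε * (p * p) * ψ ε * p := by simp only [mul_assoc]
      _ = _ := by rw [hpp]; simp only [mul_assoc]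

lemma comp_face (hL : IsMinIdeal F L) {p : M} (hp : p ∈ L) (hpp : p * p = p) (j : ι) {g : M}
    (hg : g ∈ L) (hpg : p * g = g) :
    (fun ε : ι → Bool => if ε j then g else p) ∈ compressed F ι p := by
  refine ⟨_, face_mem F j (hL.sub hg), ?_⟩
  funext ε
  split_ifs
  · rw [hpg, hL.mul_idem hg hp hpp]
  · rw [mul_one, hpp]

lemma comp_inv [CompactSpace M] [T2Space M] (hL : IsMinIdeal F L) {p : M} (hp : p ∈ L)
    (hpp : p * p = p) {ν : (ι → Bool) → M} (h : ν ∈ compressed F ι p) :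
    ∃ ν' ∈ compressed F ι p, ∀ ε, ν' ε * ν ε = p ∧ ν ε * ν' ε = p := by
  have left : ∀ ν ∈ compressed F ι p, ∃ ν' ∈ compressed F ι p, ∀ ε, ν' ε * ν ε = p := by
    rintro _ ⟨φ, hφ, rfl⟩
    obtain ⟨χ, hχ, h⟩ := exists_cube_inv hL hp hpp
      (cubeEnv_mul F (offZero_mem F (hL.sub hp) hpp) hφ)
    refine ⟨_, ⟨χ, hχ, rfl⟩, fun ε => ?_⟩
    rcases eq_zero_or ε with rfl | hε
    · simp [cubeEnv_apply_zero F hφ, cubeEnv_apply_zero F hχ, hpp]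
    · have := congrFun h ε
      simp only [Pi.mul_apply, offZero_of hε] at this
      calc p * χ ε * p * (p * φ ε * p) = p * χ ε * ((p * p) * φ ε) * p := by
            simp only [mul_assoc]
        _ = p := by rw [hpp]; exact this
  obtain ⟨ν', hν', h1⟩ := left ν h
  obtain ⟨μ, hmem, h2⟩ := left ν' hν'
  refine ⟨ν', hν', fun ε => ⟨h1 ε, ?_⟩⟩
  calc ν ε * ν' ε = (μ ε * ν' ε) * ν ε * ν' ε := by rw [h2, comp_left hpp h]
    _ = μ ε * (ν' ε * ν ε) * ν' ε := by simp only [mul_assoc]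
    _ = p := by rw [h1, comp_right hpp hmem, h2]

/-- The group of compressed cube elements is normalised by the constant elements of `p * L`. The
proof is by induction on the set of coordinates on which `ν` depends: splitting off one coordinate
`j`, the quotient of `ν` by its restriction to the face `ε j = 0` is trivial on that face, so that
conjugating it by a constant agrees with conjugating it by an element of the face `ε j = 1`. -/
lemma comp_conj [CompactSpace M] [T2Space M] (hL : IsMinIdeal F L) {p : M} (hp : p ∈ L)
    (hpp : p * p = p) {θ θ' : M} (hθ : θ ∈ L) (hθ' : θ' ∈ L) (h1 : p * θ = θ) (h1' : p * θ' = θ')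
    (h2 : θ' * θ = p) (h3 : θ * θ' = p) {ν : (ι → Bool) → M} (hν : ν ∈ compressed F ι p) :
    (fun ε => θ' * ν ε * θ) ∈ compressed F ι p := by
  classical
  let mask (J : Finset ι) : ι → Option ι := fun i => if i ∈ J then some i else none
  have h4 : θ' * p = θ' := hL.mul_idem hθ' hp hpp
  have key : ∀ J : Finset ι, ∀ ν ∈ compressed F ι p, (∀ ε, ν ε = ν (pull (mask J) ε)) →
      (fun ε => θ' * ν ε * θ) ∈ compressed F ι p := by
    intro J
    induction J using Finset.induction_on with
    | empty =>
      intro ν hν hdep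
      have : (fun ε => θ' * ν ε * θ) = ν := by
        funext ε
        have hε : ν ε = p := by
          obtain ⟨φ, hφ, rfl⟩ := hν
          rw [hdep]
          have : pull (mask ∅) ε = fun _ => false := by
            funext i
            simp [pull, mask]
          simp only [this, cubeEnv_apply_zero F hφ, mul_one, hpp]
        rw [hε, h4, h2]
      rwa [this]
    | insert j J hj ih =>
      intro ν hν hdep
      let ν₀ : (ι → Bool) → M := fun ε => ν (pull (mask J) ε)
      have hν₀ : ν₀ ∈ compressed F ι p := comp_pull (mask J) hν
      have hconj₀ := ih ν₀ hν₀ (by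
        intro ε
        simp only [ν₀]
        congr 1
        funext i
        by_cases hi : i ∈ J <;> simp [pull, mask, hi])
      obtain ⟨ν', hν', hinv⟩ := comp_inv hL hp hpp hν₀
      have hf := comp_face hL hp hpp j hθ h1
      have hf' := comp_face hL hp hpp j hθ' h1'
      have hpe := hL.sub hp
      have := comp_mul hpe hpp hconj₀
        (comp_mul hpe hpp (comp_mul hpe hpp hf' (comp_mul hpe hpp hν' hν)) hf)
      convert this using 1
      funext ε
      simp only [Pi.mul_apply]
      have hsplit : ν ε = ν₀ ε * (ν' ε * ν ε) := by
        rw [← mul_assoc, (hinv ε).2, comp_left hpp hν]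
      by_cases hε : ε j = true
      · simp only [hε, if_true]
        calc θ' * ν ε * θ = θ' * (ν₀ ε * p * (ν' ε * ν ε)) * θ := by
              rw [comp_right hpp hν₀, ← hsplit]
          _ = _ := by rw [← h3]; simp only [mul_assoc]
      · have h5 : ν₀ ε = ν ε := by
          simp only [ν₀]
          rw [hdep ε]
          congr 1
          funext i
          by_cases hi : i = j
          · subst hi
            simp [pull, mask, hj, hε]
          · simp [pull, mask, hi]
        simp only [hε]
        rw [← h5, (hinv ε).1]
        simp only [Bool.false_eq_true, if_false, hpp]
        rw [mul_assoc _ θ p, hL.mul_idem hθ hp hpp]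
  have := key Finset.univ ν hν (by
    intro ε
    congr 1
    funext i
    simp [pull, mask])
  exact this

end Algebra

/-! ### The action on cubes of points -/

section Dynamics

variable {X : Type*}

/-- The self-maps of `X` carry the topology of pointwise convergence. -/
instance [TopologicalSpace X] : TopologicalSpace (Function.End X) :=
  inferInstanceAs (TopologicalSpace (X → X))

instance [TopologicalSpace X] [T2Space X] : T2Space (Function.End X) :=
  inferInstanceAs (T2Space (X → X))

instance [TopologicalSpace X] [CompactSpace X] : CompactSpace (Function.End X) :=
  inferInstanceAs (CompactSpace (X → X))

lemma continuous_eval [TopologicalSpace X] (y : X) :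
    Continuous (fun f : Function.End X => f y) :=
  continuous_apply (A := fun _ : X => X) y

lemma itZ_continuous [TopologicalSpace X] (T : X ≃ₜ X) (n : ℤ) : Continuous (itZ T n) := by
  have h : ∀ n : ℤ, itZ T n = ⇑(T ^ n) := by
    intro n
    let g : (X ≃ₜ X) →* Equiv.Perm X :=
      { toFun := Homeomorph.toEquiv, map_one' := rfl, map_mul' := fun _ _ => rfl }
    have : g T ^ n = g (T ^ n) := (map_zpow g T n).symm
    exact congrArg (fun e : Equiv.Perm X => (e : X → X)) this
  rw [h]
  exact (T ^ n).continuous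

lemma itZ_zero [TopologicalSpace X] (T : X ≃ₜ X) (y : X) : itZ T 0 y = y := by
  simp [itZ]

lemma itZ_add [TopologicalSpace X] (T : X ≃ₜ X) (m n : ℤ) (y : X) :
    itZ T (m + n) y = itZ T m (itZ T n y) := by
  simp [itZ, zpow_add]

/-- The flow of the powers of `T` in the monoid of self-maps of `X`. -/
def endFlow [TopologicalSpace X] (T : X ≃ₜ X) : Flow (Function.End X) where
  t n := itZ T n
  t_zero := funext fun y => itZ_zero T y
  t_add m n := funext fun y => itZ_add T m n y
  cont_right r := continuous_pi fun y => continuous_apply (A := fun _ : X => X) (r y)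
  cont_left n := continuous_pi fun y => (itZ_continuous T n).comp
    (continuous_apply (A := fun _ : X => X) y)

variable {ι κ : Type*} [Fintype ι] [Fintype κ]

/-- Coordinatewise action of a cube of self-maps on a cube of points. -/
def act (φ : (ι → Bool) → Function.End X) (z : (ι → Bool) → X) : (ι → Bool) → X :=
  fun ε => φ ε (z ε)

section

omit [Fintype ι]

lemma act_mul (φ ψ : (ι → Bool) → Function.End X) (z : (ι → Bool) → X) :
    act (φ * ψ) z = act φ (act ψ z) := rfl

lemma act_continuous [TopologicalSpace X] (z : (ι → Bool) → X) :
    Continuous (fun φ : (ι → Bool) → Function.End X => act φ z) :=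
  continuous_pi fun ε => (continuous_eval (z ε)).comp (continuous_apply ε)

end

section

variable [TopologicalSpace X] (T : X ≃ₜ X)

variable (ι) in
/-- The dynamical cubes: the closure of the set of points `ε ↦ T ^ (m · ε) y`. -/
def cubes : Set ((ι → Bool) → X) :=
  closure {z | ∃ (m : ι → ℤ) (y : X), z = act (gen (endFlow T) m) fun _ => y}

lemma gen_act_continuous (m : ι → ℤ) :
    Continuous (fun z : (ι → Bool) → X => act (gen (endFlow T) m) z) :=
  continuous_pi fun ε => (itZ_continuous T _).comp (continuous_apply ε)

lemma cubes_act {φ : (ι → Bool) → Function.End X} (hφ : φ ∈ cubeEnv (endFlow T) ι)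
    {z : (ι → Bool) → X} (hz : z ∈ cubes ι T) : act φ z ∈ cubes ι T := by
  have h1 : ∀ m : ι → ℤ, act (gen (endFlow T) m) z ∈ cubes ι T := fun m =>
    map_mem_closure (gen_act_continuous T m) hz (by
      rintro _ ⟨n, y, rfl⟩
      exact ⟨m + n, y, by rw [gen_add, act_mul]⟩)
  have := map_mem_closure (act_continuous z) hφ (t := cubes ι T) (by
    rintro _ ⟨m, rfl⟩
    exact h1 m)
  rwa [cubes, closure_closure] at this

lemma cubes_diag {f : Function.End X} (hf : f ∈ env (endFlow T))
    {z : (ι → Bool) → X} (hz : z ∈ cubes ι T) : (fun ε => f (z ε)) ∈ cubes ι T := by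
  have h1 : ∀ n : ℤ, (fun ε => itZ T n (z ε)) ∈ cubes ι T := fun n =>
    map_mem_closure (f := fun (z : (ι → Bool) → X) ε => itZ T n (z ε))
      (continuous_pi fun ε => (itZ_continuous T n).comp (continuous_apply ε)) hz (by
      rintro _ ⟨m, y, rfl⟩
      refine ⟨m, itZ T n y, ?_⟩
      funext ε
      change itZ T n (itZ T _ y) = itZ T _ (itZ T n y)
      rw [← itZ_add, ← itZ_add, add_comm])
  have := map_mem_closure (f := fun (f : Function.End X) ε => f (z ε))
    (continuous_pi fun ε => continuous_eval (z ε)) hf (t := cubes ι T) (by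
    rintro _ ⟨n, rfl⟩
    exact h1 n)
  rwa [cubes, closure_closure] at this

/-- The vertex of the lower face `none = 0` of the cube with directions `Option κ`. -/
def low (ε : κ → Bool) : Option κ → Bool := fun o => o.elim false ε

lemma cubes_low {z : (Option κ → Bool) → X} (hz : z ∈ cubes (Option κ) T) :
    (fun ε => z (low ε)) ∈ cubes κ T := by
  refine map_mem_closure (f := fun (z : (Option κ → Bool) → X) (ε : κ → Bool) => z (low ε))
    (by fun_prop) hz ?_
  rintro _ ⟨m, y, rfl⟩
  refine ⟨fun k => m (some k), y, ?_⟩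
  funext ε
  simp [act, gen, low, Fintype.sum_option]
  rfl

lemma cubeEnv_double {φ : (κ → Bool) → Function.End X} (h : φ ∈ cubeEnv (endFlow T) κ) :
    (fun ε : Option κ → Bool => φ (fun k => ε (some k))) ∈ cubeEnv (endFlow T) (Option κ) :=
  cubeEnv_pull (endFlow T) (fun k => some (some k)) h

end

/-- A Baire category argument: for a residual set of points `y`, every dynamical cube based at `y`
is the image of the constant cube `y` under an element of the enveloping semigroup of the face
group. For each basic open set `V` of cubes, `y` is required to avoid the boundary of the open
set of points some face translate of which lies in `V`. -/
lemma exists_generic [MetricSpace X] [CompactSpace X] [Nonempty X] (T : X ≃ₜ X) :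
    ∃ y : X, ∀ z ∈ cubes ι T, z (fun _ => false) = y →
      ∃ φ ∈ cubeEnv (endFlow T) ι, z = act φ fun _ => y := by
  let B := TopologicalSpace.countableBasis ((ι → Bool) → X)
  have hB := TopologicalSpace.isBasis_countableBasis ((ι → Bool) → X)
  let O (V : Set ((ι → Bool) → X)) : Set X :=
    {y | ∃ m : ι → ℤ, act (gen (endFlow T) m) (fun _ => y) ∈ V}
  have hO : ∀ V, IsOpen V → IsOpen (O V) := by
    intro V hV
    have : O V = ⋃ m : ι → ℤ, (fun y : X => act (gen (endFlow T) m) fun _ => y) ⁻¹' V := by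
      ext y
      simp [O]
    rw [this]
    refine isOpen_iUnion fun m => hV.preimage ((gen_act_continuous T m).comp ?_)
    exact continuous_pi fun _ => continuous_id
  have hcount : Countable B := (TopologicalSpace.countable_countableBasis _).to_subtype
  have hdense : Dense (⋂ V : B, (frontier (O V))ᶜ) := by
    refine dense_iInter_of_isOpen (fun V => isClosed_frontier.isOpen_compl) fun V => ?_
    rw [← interior_eq_empty_iff_dense_compl, ← frontier_compl]
    exact interior_frontier (hO V (hB.isOpen V.2)).isClosed_compl
  obtain ⟨y, hy⟩ := hdense.nonempty
  refine ⟨y, fun z hz hzy => ?_⟩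
  by_contra hcon
  let N : Set ((ι → Bool) → X) :=
    (fun φ => act φ fun _ => y) '' cubeEnv (endFlow T) ι
  have hN : IsClosed N := (isClosed_closure.isCompact.image (act_continuous _)).isClosed
  have hzN : z ∈ Nᶜ := by
    rintro ⟨φ, hφ, h⟩
    exact hcon ⟨φ, hφ, h.symm⟩
  obtain ⟨V, hVB, hzV, hVN⟩ := hB.exists_subset_of_mem_open hzN hN.isOpen_compl
  have hVo := hB.isOpen hVB
  have hcl : y ∈ closure (O V) := by
    rw [mem_closure_iff]
    intro W hW hyW
    have hopen : IsOpen (V ∩ (fun z : (ι → Bool) → X => z (fun _ => false)) ⁻¹' W) :=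
      hVo.inter (hW.preimage (continuous_apply (A := fun _ : ι → Bool => X) fun _ => false))
    obtain ⟨_, ⟨h1, h2⟩, m, y', rfl⟩ :=
      mem_closure_iff.1 hz _ hopen ⟨hzV, by simpa [hzy] using hyW⟩
    refine ⟨y', ?_, m, h1⟩
    have : act (gen (endFlow T) m) (fun _ => y') (fun _ => false) = y' := by
      change itZ T _ y' = y'
      simp [itZ_zero]
    simpa [this] using h2
  have hyO : y ∈ O V := by
    by_contra hnot
    refine Set.mem_iInter.1 hy ⟨V, hVB⟩ ⟨hcl, ?_⟩
    rwa [(hO V hVo).interior_eq]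
  obtain ⟨m, hm⟩ := hyO
  exact hVN hm ⟨_, gen_mem _ m, rfl⟩

variable [MetricSpace X] [CompactSpace X] {T : X ≃ₜ X} {L : Set (Function.End X)}

lemma exists_mem_apply_eq (hmin : IsMinimalSystem T) (hL : IsMinIdeal (endFlow T) L) (x w : X) :
    ∃ l ∈ L, l x = w := by
  obtain ⟨l₀, hl₀⟩ := hL.nonempty
  -- The orbit closure of `l₀ x` is contained in the compact set `L x`.
  have hcl : IsClosed ((fun l : Function.End X => l x) '' L) :=
    (hL.closed.isCompact.image (continuous_eval x)).isClosed
  have hsub : Set.range (fun n : ℤ => itZ T n (l₀ x)) ⊆ (fun l : Function.End X => l x) '' L := by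
    rintro _ ⟨n, rfl⟩
    exact ⟨_, hL.mul_mem _ (t_mem_env (endFlow T) n) _ hl₀, rfl⟩
  obtain ⟨l, hl, h⟩ := hcl.closure_subset_iff.2 hsub (hmin (l₀ x) w)
  exact ⟨l, hl, h⟩

lemma exists_idem_fix (hmin : IsMinimalSystem T) (hL : IsMinIdeal (endFlow T) L) (y : X) :
    ∃ q ∈ L, q * q = q ∧ q y = y := by
  obtain ⟨q, ⟨hq, hqy⟩, hqq⟩ := exists_idempotent_in_compact_subsemigroup
    (endFlow T).cont_right (L ∩ {l : Function.End X | l y = y})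
    (by
      obtain ⟨l, hl, h⟩ := exists_mem_apply_eq hmin hL y y
      exact ⟨l, hl, h⟩)
    (hL.closed.inter (isClosed_eq (continuous_eval y) continuous_const)).isCompact
    (by
      rintro a ⟨ha, hay⟩ b ⟨hb, hby⟩
      refine ⟨hL.mul_mem a (hL.sub ha) b hb, ?_⟩
      change a (b y) = y
      rw [show b y = y from hby]
      exact hay)
  exact ⟨q, hq, hqq, hqy⟩

/-- Every dynamical cube based at `x` is carried to the constant cube `x` by some element of the
enveloping semigroup of the face group. The cube is moved by an element of `p * L` to one based at
a generic point, where it is a face image of a constant cube; normality of the compressed group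
(`comp_conj`) allows this to be transported back to `x`. -/
theorem exists_act_eq_const (hmin : IsMinimalSystem T) {z : (ι → Bool) → X}
    (hz : z ∈ cubes ι T) :
    ∃ ρ ∈ cubeEnv (endFlow T) ι, act ρ z = fun _ => z (fun _ => false) := by
  obtain ⟨x, hx⟩ : ∃ x, z (fun _ => false) = x := ⟨_, rfl⟩
  have : Nonempty X := ⟨x⟩
  obtain ⟨L, hL⟩ := exists_isMinIdeal (endFlow T)
  obtain ⟨x₀, hgen⟩ := exists_generic (ι := ι) T
  obtain ⟨p, hp, hpp, hpx₀⟩ := exists_idem_fix hmin hL x₀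
  obtain ⟨θ₁, hθ₁, hθ₁x⟩ := exists_mem_apply_eq hmin hL x x₀
  obtain ⟨θ, hθ, hpθ, hθx⟩ : ∃ θ ∈ L, p * θ = θ ∧ θ x = x₀ := by
    refine ⟨p * θ₁, hL.mul_mem p (hL.sub hp) _ hθ₁, by rw [← mul_assoc, hpp], ?_⟩
    change p (θ₁ x) = x₀
    rw [hθ₁x, hpx₀]
  obtain ⟨θ', hθ', hpθ', h1, h2⟩ := hL.exists_inv hp hpp hθ hpθ
  obtain ⟨φ, hφ, hφz⟩ := hgen _ (cubes_diag T (hL.sub hθ) hz)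
    (by rw [hx, hθx])
  obtain ⟨ψ, hψ, hψeq⟩ := comp_conj hL hp hpp hθ hθ' hpθ hpθ' h1 h2 ⟨φ, hφ, rfl⟩
  have hz1 : ∀ ε, p (z ε) = p (ψ ε (p x)) := by
    intro ε
    have e1 : θ (z ε) = φ ε x₀ := congrFun hφz ε
    have e2 : θ' * φ ε * θ = p * ψ ε * p := by
      rw [← congrFun hψeq ε]
      calc θ' * φ ε * θ = (θ' * p) * φ ε * (p * θ) := by rw [hpθ, hL.mul_idem hθ' hp hpp]
        _ = _ := by simp only [mul_assoc]
    calc p (z ε) = (θ' * θ) (z ε) := by rw [h1]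
      _ = θ' (θ (z ε)) := rfl
      _ = θ' (φ ε (θ x)) := by rw [e1, hθx]
      _ = (θ' * φ ε * θ) x := rfl
      _ = (p * ψ ε * p) x := by rw [e2]
      _ = _ := rfl
  have hu : (offZero p : (ι → Bool) → Function.End X) ∈ cubeEnv (endFlow T) ι :=
    offZero_mem _ (hL.sub hp) hpp
  have huz : act (offZero p) z = act (offZero p * ψ * offZero p) fun _ => x := by
    funext ε
    rcases eq_zero_or ε with rfl | hε
    · simp only [act, Pi.mul_apply, offZero_zero, cubeEnv_apply_zero _ hψ]
      exact hx
    · simp only [act, Pi.mul_apply, offZero_of hε]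
      exact hz1 ε
  obtain ⟨χ, hχ, hinv⟩ := exists_cube_inv hL hp hpp (cubeEnv_mul _ hu hψ)
  obtain ⟨p', hp', hpp', hfix⟩ := exists_idem_fix hmin hL x
  have hu' : (offZero p' : (ι → Bool) → Function.End X) ∈ cubeEnv (endFlow T) ι :=
    offZero_mem _ (hL.sub hp') hpp'
  refine ⟨offZero p' * (offZero p * χ * offZero p),
    cubeEnv_mul _ hu' (cubeEnv_mul _ (cubeEnv_mul _ hu hχ) hu), ?_⟩
  have e3 : act (offZero p * χ * offZero p) z = act (offZero p) fun _ => x := by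
    rw [act_mul, huz, ← act_mul]
    nth_rewrite 4 [← hinv]
    simp only [mul_assoc]
  rw [act_mul, e3, hx]
  funext ε
  rcases eq_zero_or ε with rfl | hε
  · simp only [act, offZero_zero]
    rfl
  · simp only [act, offZero_of hε]
    change (p' * p) x = x
    rw [hL.mul_idem hp' hp hpp, hfix]

/-! ### Regionally proximal pairs -/

/-- The vertex of the cube with directions `Option κ` whose only nonzero coordinate is `none`. -/
def tip : Option κ → Bool := fun o => o.isNone

omit [Fintype κ] in
lemma option_cases (ε : Option κ → Bool) :
    ε = (fun _ => false) ∨ ε = tip ∨ ∃ k, ε (some k) = true := by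
  rcases eq_zero_or (fun k => ε (some k)) with h | h
  · have h' : ∀ k, ε (some k) = false := fun k => congrFun h k
    by_cases hn : ε none = true
    · refine Or.inr (Or.inl ?_)
      funext o
      cases o <;> simp [tip, hn, h']
    · refine Or.inl ?_
      funext o
      cases o <;> simp [hn, h']
  · exact Or.inr (Or.inr h)

/-- A pair `(x, y)` that is regionally proximal of order `d` gives a dynamical cube of dimension
`d + 1` with `x` at the origin and `y` at `tip`, and which is otherwise constant in the additional
direction. -/
lemma exists_cube_of_RP {d : ℕ} (hmin : IsMinimalSystem T) {x y : X} (h : RP d T x y) :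
    ∃ z ∈ cubes (Option (Fin d)) T, z (fun _ => false) = x ∧ z tip = y ∧
      ∀ ε : Option (Fin d) → Bool, (∃ i, ε (some i) = true) →
        z ε = z (low fun i => ε (some i)) := by
  let K (δ : ℝ) : Set ((Option (Fin d) → Bool) → X) :=
    {z | dist (z fun _ => false) x ≤ δ ∧ dist (z tip) y ≤ δ ∧
      ∀ ε : Option (Fin d) → Bool, (∃ i, ε (some i) = true) →
        dist (z ε) (z (low fun i => ε (some i))) ≤ δ}
  have hK : ∀ δ, IsClosed (K δ) := by
    intro δ
    have hc : ∀ ε, Continuous fun z : (Option (Fin d) → Bool) → X => z ε :=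
      fun ε => continuous_apply ε
    refine (isClosed_le ((hc _).dist continuous_const) continuous_const).and
      ((isClosed_le ((hc _).dist continuous_const) continuous_const).and ?_)
    · simp only [Set.ofPred_forall]
      exact isClosed_iInter fun ε => isClosed_iInter fun _ =>
        isClosed_le ((hc _).dist (hc _)) continuous_const
  have hne : ∀ δ > 0, (cubes (Option (Fin d)) T ∩ K δ).Nonempty := by
    intro δ hδ
    obtain ⟨x', y', m, hx, hy, hm⟩ := h (δ / 2) (by positivity)
    -- Replace `y'` by a nearby point of the orbit of `x'`.
    have hopen : IsOpen ({w | dist w y' < δ / 2} ∩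
        ⋂ ε : Fin d → Bool, {w | dist (itZ T (ndot m ε) w) (itZ T (ndot m ε) y') < δ / 2}) := by
      refine IsOpen.inter (isOpen_lt (by fun_prop) (by fun_prop)) ?_
      exact isOpen_iInter_of_finite fun ε =>
        isOpen_lt ((itZ_continuous T _).dist continuous_const) continuous_const
    obtain ⟨_, ⟨h1, h2⟩, l, rfl⟩ := (hmin x').inter_open_nonempty _ hopen
      ⟨y', by simpa using hδ, by simpa using hδ⟩
    rw [Set.mem_iInter] at h2
    let n : Option (Fin d) → ℤ := fun o => o.elim l m
    have hval : ∀ ε : Option (Fin d) → Bool, act (gen (endFlow T) n) (fun _ => x') ε =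
        itZ T (ndot m fun i => ε (some i)) (if ε none then itZ T l x' else x') := by
      intro ε
      change itZ T (∑ o, _) x' = _
      rw [Fintype.sum_option]
      cases hε : ε none
      · simp [n, ndot]
      · simp only [n, Option.elim, if_true]
        rw [add_comm, itZ_add]
        rfl
    refine ⟨act (gen (endFlow T) n) fun _ => x', subset_closure ⟨n, x', rfl⟩, ?_, ?_, ?_⟩
    · rw [hval]
      simp only [ndot, Bool.false_eq_true, if_false, Finset.sum_const_zero, itZ_zero]
      rw [dist_comm]
      linarith
    · rw [hval]
      simp only [ndot, tip, Option.isNone, Bool.false_eq_true, if_false, Finset.sum_const_zero,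
        itZ_zero, if_true]
      have := dist_triangle (itZ T l x') y' y
      rw [dist_comm y' y] at this
      have h1' : dist (itZ T l x') y' < δ / 2 := h1
      linarith
    · intro ε hε
      rw [hval, hval]
      have hne : (fun i => ε (some i)) ≠ fun _ => false := by
        obtain ⟨i, hi⟩ := hε
        intro hcon
        have := congrFun hcon i
        simp [hi] at this
      have h3 := hm _ hne
      have h4 : dist (itZ T (ndot m fun i => ε (some i)) (itZ T l x'))
        (itZ T (ndot m fun i => ε (some i)) y') < δ / 2 := h2 fun i => ε (some i)
      simp only [low, Option.elim, Bool.false_eq_true, if_false]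
      split_ifs
      · have := dist_triangle_right (itZ T (ndot m fun i => ε (some i)) (itZ T l x'))
          (itZ T (ndot m fun i => ε (some i)) x') (itZ T (ndot m fun i => ε (some i)) y')
        linarith
      · rw [dist_self]
        exact hδ.le
  obtain ⟨z, hz⟩ := IsCompact.nonempty_iInter_of_sequence_nonempty_isCompact_isClosed
    (fun n : ℕ => cubes (Option (Fin d)) T ∩ K (1 / ((n : ℝ) + 1)))
    (fun n z hz => ⟨hz.1, by
      have hle : 1 / (((n + 1 : ℕ) : ℝ) + 1) ≤ 1 / ((n : ℝ) + 1) := by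
        apply one_div_le_one_div_of_le (by positivity)
        push_cast
        linarith
      exact ⟨hz.2.1.trans hle, hz.2.2.1.trans hle, fun ε hε => (hz.2.2.2 ε hε).trans hle⟩⟩)
    (fun n => hne _ (by positivity))
    (isClosed_closure.inter (hK _)).isCompact
    (fun n => isClosed_closure.inter (hK _))
  rw [Set.mem_iInter] at hz
  have hzero : ∀ a b : X, (∀ n : ℕ, dist a b ≤ 1 / ((n : ℝ) + 1)) → a = b := by
    intro a b hab
    exact dist_le_zero.1 (ge_of_tendsto' tendsto_one_div_add_atTop_nhds_zero_nat hab)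
  exact ⟨z, (hz 0).1, hzero _ _ fun n => (hz n).2.1, hzero _ _ fun n => (hz n).2.2.1,
    fun ε hε => hzero _ _ fun n => (hz n).2.2.2 ε hε⟩

/-- If `(x, y)` is regionally proximal of order `d`, then some element of the enveloping semigroup
of the `(d + 1)`-dimensional face group moves the constant cube `x` to the cube equal to `y` at
`tip` and to `x` at all other vertices. -/
theorem exists_act_of_RP {d : ℕ} (hmin : IsMinimalSystem T) {x y : X} (h : RP d T x y) :
    ∃ φ ∈ cubeEnv (endFlow T) (Option (Fin d)), φ tip x = y ∧
      ∀ ε : Option (Fin d) → Bool, (∃ i, ε (some i) = true) → φ ε x = x := by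
  obtain ⟨z, hz, hzx, hzy, hzlow⟩ := exists_cube_of_RP hmin h
  have hlow0 : (low fun _ : Fin d => false) = fun _ => false := by
    funext o
    cases o <;> rfl
  have htip : (fun k : Fin d => tip (some k)) = fun _ => false := rfl
  -- Straighten the lower face of `z`, and hence also the upper face away from `tip`.
  obtain ⟨ρ, hρ, hρz⟩ := exists_act_eq_const hmin (cubes_low T hz)
  rw [hlow0, hzx] at hρz
  have hz2 := cubes_act T (cubeEnv_double T hρ) hz
  -- Align the result with an idempotent `q` fixing `y`.
  obtain ⟨L, hL⟩ := exists_isMinIdeal (endFlow T)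
  obtain ⟨q, hq, hqq, hqy⟩ := exists_idem_fix hmin hL y
  have hu : (offZero q : (Option (Fin d) → Bool) → Function.End X) ∈ cubeEnv (endFlow T) _ :=
    offZero_mem _ (hL.sub hq) hqq
  have hz3 := cubes_act T hu hz2
  set z2 := act (fun ε : Option (Fin d) → Bool => ρ fun k => ε (some k)) z with hz2def
  set z3 := act (offZero q) z2 with hz3def
  have z30 : z3 (fun _ => false) = x := by
    simp only [hz3def, hz2def, act, offZero_zero, cubeEnv_apply_zero _ hρ]
    exact hzx
  have z3tip : z3 tip = y := by
    have e : (offZero q : (Option (Fin d) → Bool) → Function.End X) tip = q :=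
      offZero_of ⟨none, rfl⟩
    simp only [hz3def, hz2def, act, e, htip, cubeEnv_apply_zero _ hρ]
    change q (z tip) = y
    rw [hzy, hqy]
  have z3other : ∀ ε : Option (Fin d) → Bool, (∃ i, ε (some i) = true) → z3 ε = q x := by
    intro ε hε
    have e : (offZero q : (Option (Fin d) → Bool) → Function.End X) ε = q :=
      offZero_of (hε.imp' some fun _ => id)
    simp only [hz3def, hz2def, act, e]
    rw [hzlow ε hε]
    exact congrArg q (congrFun hρz fun i => ε (some i))
  have hqz3 : act (offZero q) z3 = z3 := by
    rw [hz3def, ← act_mul]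
    congr 1
    funext ε
    rcases eq_zero_or ε with rfl | hε
    · simp [offZero_zero]
    · simp [offZero_of hε, hqq]
  -- Write `z3` as a face image of the constant cube `x`.
  obtain ⟨ρ₂, hρ₂, hρ₂z⟩ := exists_act_eq_const hmin hz3
  rw [z30] at hρ₂z
  obtain ⟨ψ, hψ, hinv⟩ := exists_cube_inv hL hq hqq hρ₂
  have hz3x : z3 = act (offZero q * ψ) fun _ => x := by
    have e := congrArg (fun φ => act φ z3) hinv
    simp only [act_mul, hqz3, hρ₂z] at e
    rw [act_mul, ← e]
  -- Restore the value `x` on the lower face; this does not affect `tip`.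
  obtain ⟨ρ₃, hρ₃, hρ₃z⟩ := exists_act_eq_const hmin (cubes_low T hz3)
  rw [hlow0, z30] at hρ₃z
  refine ⟨_, cubeEnv_mul _ (cubeEnv_double T hρ₃) (cubeEnv_mul _ hu hψ), ?_, ?_⟩
  · change ρ₃ (fun k => tip (some k)) (act (offZero q * ψ) (fun _ => x) tip) = y
    rw [← z3tip, hz3x, htip, cubeEnv_apply_zero _ hρ₃]
    rfl
  · intro ε hε
    change ρ₃ (fun k => ε (some k)) (act (offZero q * ψ) (fun _ => x) ε) = x
    have e1 : act (offZero q * ψ) (fun _ => x) ε = q x := by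
      rw [← z3other ε hε, hz3x]
    have e2 : z3 (low fun k => ε (some k)) = q x := z3other _ hε
    rw [e1, ← e2]
    exact congrFun hρ₃z fun k => ε (some k)

/-! ### The face group -/

omit [CompactSpace X] in
lemma faceTransform_zpow {D : ℕ} (T : X ≃ₜ X) (j : Fin D) (n : ℤ) (w : (Fin D → Bool) → X)
    (ε : Fin D → Bool) :
    (faceTransform D T j ^ n) w ε = if ε j then itZ T n (w ε) else w ε := by
  let g (ε : Fin D → Bool) : Equiv.Perm X := if ε j = true then T.toEquiv else 1
  have hpow : ∀ n : ℕ, ∀ w ε, (faceTransform D T j ^ n) w ε = (g ε ^ n) (w ε) := by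
    intro n
    induction n with
    | zero => intro w ε; rfl
    | succ n ih =>
      intro w ε
      rw [pow_succ, pow_succ, Equiv.Perm.mul_apply, Equiv.Perm.mul_apply, ih]
      rfl
  have hz : (faceTransform D T j ^ n) w ε = (g ε ^ n) (w ε) := by
    cases n with
    | ofNat n => exact hpow n w ε
    | negSucc n =>
      rw [zpow_negSucc, zpow_negSucc, Equiv.Perm.eq_inv_iff_eq, ← hpow,
        ← Equiv.Perm.mul_apply, mul_inv_cancel, Equiv.Perm.one_apply]
  rw [hz]
  by_cases hε : ε j = true
  · simp only [g, hε, if_true]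
    rfl
  · simp [g, hε]

omit [CompactSpace X] in
lemma act_mem_faceOrbitClosure {D : ℕ} {Φ : (Fin D → Bool) → Function.End X}
    (hΦ : Φ ∈ cubeEnv (endFlow T) (Fin D)) (x : X) :
    (fun ε => Φ ε x) ∈ faceOrbitClosure D T fun _ => x := by
  refine map_mem_closure (act_continuous fun _ => x) hΦ ?_
  rintro _ ⟨m, rfl⟩
  have key : ∀ J : Finset (Fin D), ∃ S ∈ faceGroup D T, ∀ w ε,
      S w ε = itZ T (∑ i ∈ J, if ε i then m i else 0) (w ε) := by
    intro J
    induction J using Finset.induction_on with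
    | empty => exact ⟨1, one_mem _, fun w ε => by simp [itZ_zero]⟩
    | insert j J hj ih =>
      obtain ⟨S, hS, h⟩ := ih
      have hj' : faceTransform D T j ∈ faceGroup D T := Subgroup.subset_closure ⟨j, rfl⟩
      refine ⟨faceTransform D T j ^ m j * S, mul_mem (zpow_mem hj' _) hS, fun w ε => ?_⟩
      rw [Equiv.Perm.mul_apply, faceTransform_zpow, h, Finset.sum_insert hj, itZ_add]
      split_ifs
      · rfl
      · rw [itZ_zero]
  obtain ⟨S, hS, h⟩ := key Finset.univ
  exact ⟨S, hS, funext fun ε => (h (fun _ => x) ε).symm⟩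

end Dynamics

end CubeFlow


/-- If `(x, xs i) ∈ RP^[d]` for all `i`, then there is a point `yv`
in the closure of the `F^[d+k]`-orbit of the diagonal point `x^[d+k]` with
`yv ω_i = xs i` (where `ω_i` is the element of `{0,1}^{d+k}` supported exactly at
coordinate `d+i`) and `yv ε = x` for every `ε` having some nonzero coordinate among
the first `d` ones. -/
theorem statement2 {X : Type*} [MetricSpace X] [CompactSpace X] (T : X ≃ₜ X)
    (hmin : IsMinimalSystem T) (d k : ℕ) (hd : 1 ≤ d) (hk : 1 ≤ k)
    (x : X) (xs : Fin k → X) (h : ∀ i : Fin k, RP d T x (xs i)) :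
    ∃ yv ∈ faceOrbitClosure (d + k) T (fun _ => x),
      (∀ i : Fin k,
          yv (fun m : Fin (d + k) => decide ((m : ℕ) = d + (i : ℕ))) = xs i) ∧
        ∀ ε : Fin (d + k) → Bool,
          (∃ j : Fin (d + k), (j : ℕ) < d ∧ ε j = true) → yv ε = x := by
  classical
  have h0 := fun i => CubeFlow.exists_act_of_RP hmin (h i)
  choose φ hφ hφtip hφx using h0
  -- The additional direction of the `i`-th cube becomes the direction `d + i`.
  let e (i : Fin k) : Option (Fin d) → Option (Fin (d + k)) :=
    fun o => some (o.elim (Fin.natAdd d i) (Fin.castAdd k))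
  let ω (i : Fin k) : Fin (d + k) → Bool := fun m => decide ((m : ℕ) = d + (i : ℕ))
  have hpull : ∀ i, (fun ε => φ i (CubeFlow.pull (e i) ε)) ∈
      CubeFlow.cubeEnv (CubeFlow.endFlow T) (Fin (d + k)) :=
    fun i => CubeFlow.cubeEnv_pull _ (e i) (hφ i)
  have hωself : ∀ i, CubeFlow.pull (e i) (ω i) = CubeFlow.tip := by
    intro i
    funext o
    cases o with
    | none => simp [CubeFlow.pull, e, ω, CubeFlow.tip]
    | some j =>
      have := j.isLt
      simp [CubeFlow.pull, e, ω, CubeFlow.tip]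
      omega
  have hωother : ∀ i j, j ≠ i → CubeFlow.pull (e i) (ω j) = fun _ => false := by
    intro i j hij
    funext o
    cases o with
    | none =>
      have : (i : ℕ) ≠ j := fun hcon => hij (Fin.ext hcon.symm)
      simp [CubeFlow.pull, e, ω, this]
    | some l =>
      have := l.isLt
      simp [CubeFlow.pull, e, ω]
      omega
  have key : ∀ s : Finset (Fin k),
      ∃ Φ ∈ CubeFlow.cubeEnv (CubeFlow.endFlow T) (Fin (d + k)),
        (∀ i, Φ (ω i) x = if i ∈ s then xs i else x) ∧
          ∀ ε : Fin (d + k) → Bool,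
            (∃ j : Fin (d + k), (j : ℕ) < d ∧ ε j = true) → Φ ε x = x := by
    intro s
    induction s using Finset.induction_on with
    | empty => exact ⟨1, CubeFlow.one_mem_cubeEnv _, fun i => by simp; rfl, fun ε _ => rfl⟩
    | insert i s hi ih =>
      obtain ⟨Φ, hΦ, hΦω, hΦx⟩ := ih
      refine ⟨_, CubeFlow.cubeEnv_mul _ (hpull i) hΦ, fun j => ?_, fun ε hε => ?_⟩
      · change φ i (CubeFlow.pull (e i) (ω j)) (Φ (ω j) x) = _
        rw [hΦω]
        by_cases hji : j = i
        · subst hji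
          rw [hωself, if_neg hi, hφtip, if_pos (Finset.mem_insert_self _ _)]
        · rw [hωother i j hji, CubeFlow.cubeEnv_apply_zero _ (hφ i)]
          simp [hji]
          rfl
      · change φ i (CubeFlow.pull (e i) ε) (Φ ε x) = x
        rw [hΦx ε hε]
        obtain ⟨j, hj, hεj⟩ := hε
        refine hφx i _ ⟨⟨j, hj⟩, ?_⟩
        simpa [CubeFlow.pull, e] using hεj
  obtain ⟨Φ, hΦ, hΦω, hΦx⟩ := key Finset.univ
  refine ⟨_, CubeFlow.act_mem_faceOrbitClosure hΦ x, fun i => ?_, hΦx⟩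
  simpa using hΦω i
end

section
/- Let (X,T) be a minimal topological dynamical system and d ∈ ℕ. Let ω ∈ {0,1}^d, x⃗ ∈ Q^[d](X), and let y⃗ ∈ X^{{0,1}^d} be such that y⃗(ε) = x⃗(ε) for all ε ∈ {0,1}^d \ {ω} and (x⃗(ω), y⃗(ω)) ∈ RP^[∞](X). If y⃗ is a minimal point of the system (X^{{0,1}^d}, T^[d]), where T^[d] acts as T in every coordinate, then y⃗ ∈ Q^[d](X). -/
/-- A point is minimal if its orbit closure is a minimal subsystem. -/
def IsMinimalPoint {Y : Type*} [TopologicalSpace Y] (S : Y ≃ₜ Y) (y : Y) : Prop :=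
  ∀ z ∈ closure (Set.range fun n : ℤ => itZ S n y),
    closure (Set.range fun n : ℤ => itZ S n z)
      = closure (Set.range fun n : ℤ => itZ S n y)

/-- The regionally proximal relation of order `∞`. -/
def RPinf {X : Type*} [MetricSpace X] (T : X ≃ₜ X) (x y : X) : Prop :=
  ∀ d : ℕ, 1 ≤ d → RP d T x y

/-- The dynamical cubespace `Q^[m](X)`. -/
def cubeQ {X : Type*} [TopologicalSpace X] (m : ℕ) (T : X ≃ₜ X) :
    Set ((Fin m → Bool) → X) :=
  closure {xv | ∃ (x : X) (n : Fin m → ℤ), xv = fun ε => itZ T (ndot n ε) x}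


/-!
The proof replaces the vertex `ω` of a point of `Q^[d](X)` by another one, at the cost of moving to
a nearby generic base point. The reflection `vflip ω` reduces everything to the vertex `0⃗`.

Let `cubePair T d` be the set of pairs that are the `0⃗`-coordinates of two points of `Q^[d](X)`
agreeing at all other vertices. It is closed, invariant, and contains `RP^[d](X)`.

*Generic base points.* By Baire, for a dense set of `a`, every point of `Q^[d](X)` with
`0⃗`-coordinate `a` is a limit of cubes `(T^{n⃗·ε} a)_ε` based at `a` (`dense_generic`). For every
`a` the orbit closure of `(a,…,a)` under the face group `{(T^{n⃗·ε})_ε}` is minimal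
(`face_minimal`): a minimal idempotent `u` of the Ellis semigroup of `T` fixing `a`, placed on all
nonzero vertices, lies in the Ellis semigroup of the face group, and is minimal in each coordinate.
So if `a` is generic and `(a, b)` is in `cubePair T d`, the face group moves the common vertices of
the two witnesses back to `a`, giving `(b, a, …, a) ∈ Q^[d](X)`, and then
`(b, (T^{n⃗·ε} a)_{ε ≠ 0⃗}) ∈ Q^[d](X)` for all `n⃗` (`replace_generic`).

*Reaching generic base points.* The conditions that `y` with its vertex `ω` replaced by `a` is in
`Q^[d](X)` and that `(a, y ω)` is in `cubePair T d` define a closed invariant set of pairs `(a, y)`.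
As `yv` is a minimal point, this set contains a minimal set `N` having some `(a, yv)` as a member.
The projection of `N` to `X` is semi-open (`semiopen`), so the points of `N` close to `(a, yv)`
project onto a set with an interior point `α₀`, say from `(α₀, y₀)`. The point `y₀` with vertex `ω`
replaced by `α₀` is in `Q^[d](X)`, hence close to a cube whose base point `α` may be taken generic
and still in that interior. Then `(α, b)` is in `cubePair T d` for some `b` close to `yv ω`, and
replacing the base vertex of the cube by `b` produces a point of `Q^[d](X)` close to `yv`.
-/

open Set Topology

/-! ### Iterates, cubes and minimal closed sets -/

section Basics

variable {X : Type*} [TopologicalSpace X] (T : X ≃ₜ X)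

lemma itZ_zero : itZ T 0 = id := by
  funext x; simp [itZ]

lemma itZ_add (m n : ℤ) : itZ T (m + n) = itZ T m ∘ itZ T n := by
  funext x; simp [itZ, zpow_add]

lemma itZ_add_apply (m n : ℤ) (x : X) : itZ T (m + n) x = itZ T m (itZ T n x) := by
  rw [itZ_add]; rfl

lemma itZ_comm (m n : ℤ) (x : X) : itZ T m (itZ T n x) = itZ T n (itZ T m x) := by
  rw [← itZ_add_apply, ← itZ_add_apply, add_comm]

lemma itZ_neg_cancel (n : ℤ) (x : X) : itZ T (-n) (itZ T n x) = x := by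
  rw [← itZ_add_apply, neg_add_cancel, itZ_zero]; rfl

lemma itZ_one : itZ T 1 = T := by
  funext x; simp [itZ]

lemma itZ_neg_one : itZ T (-1) = T.symm := by
  funext x; simp [itZ]

lemma continuous_itZ (n : ℤ) : Continuous (itZ T n) := by
  induction n using Int.induction_on with
  | zero => rw [itZ_zero]; exact continuous_id
  | succ n ih => rw [itZ_add, itZ_one]; exact ih.comp T.continuous
  | pred n ih => rw [sub_eq_add_neg, itZ_add, itZ_neg_one]; exact ih.comp T.symm.continuous

lemma itZ_pi {ι : Type*} (n : ℤ) (y : ι → X) :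
    itZ (Homeomorph.piCongrRight fun _ : ι => T) n y = fun i => itZ T n (y i) := by
  induction n using Int.induction_on generalizing y with
  | zero => simp [itZ_zero]
  | succ n ih => rw [itZ_add_apply, itZ_one, ih]; funext i; rw [itZ_add_apply, itZ_one]; rfl
  | pred n ih =>
    rw [sub_eq_add_neg, itZ_add_apply, itZ_neg_one, ih]
    funext i; rw [itZ_add_apply, itZ_neg_one]; rfl

lemma ndot_add {d : ℕ} (m n : Fin d → ℤ) (ε : Fin d → Bool) :
    ndot (m + n) ε = ndot m ε + ndot n ε := by
  unfold ndot
  rw [← Finset.sum_add_distrib]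
  refine Finset.sum_congr rfl fun i _ => ?_
  split_ifs <;> simp

lemma ndot_zero {d : ℕ} (n : Fin d → ℤ) : ndot n (fun _ => false) = 0 := by
  simp [ndot]

/-- The cube `(T^{n⃗·ε} x)_ε` based at `x` with side vector `n⃗`. -/
def cubePt {d : ℕ} (n : Fin d → ℤ) (x : X) : (Fin d → Bool) → X :=
  fun ε => itZ T (ndot n ε) x

lemma cubePt_mem {d : ℕ} (n : Fin d → ℤ) (x : X) : cubePt T n x ∈ cubeQ d T :=
  subset_closure ⟨x, n, rfl⟩

/-- A continuous self-map of `X^{{0,1}^d}` that sends cubes to cubes preserves `Q^[d](X)`. -/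
lemma cubeQ_map {d : ℕ} {Φ : ((Fin d → Bool) → X) → ((Fin d → Bool) → X)} (hΦ : Continuous Φ)
    (h : ∀ (x : X) (n : Fin d → ℤ), Φ (cubePt T n x) ∈ cubeQ d T)
    {z : (Fin d → Bool) → X} (hz : z ∈ cubeQ d T) : Φ z ∈ cubeQ d T := by
  have hcl : IsClosed (Φ ⁻¹' cubeQ d T) := isClosed_closure.preimage hΦ
  refine closure_minimal ?_ hcl hz
  rintro _ ⟨x, n, rfl⟩
  exact h x n

lemma cubeQ_diag {d : ℕ} (k : ℤ) {z : (Fin d → Bool) → X} (hz : z ∈ cubeQ d T) :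
    (fun ε => itZ T k (z ε)) ∈ cubeQ d T := by
  refine cubeQ_map T (Φ := fun z ε => itZ T k (z ε))
    (continuous_pi fun ε => (continuous_itZ T k).comp (continuous_apply ε)) ?_ hz
  intro x n
  refine subset_closure ⟨itZ T k x, n, ?_⟩
  funext ε
  exact itZ_comm T _ _ _

/-- `Q^[d](X)` is invariant under the face transformations fixing the vertex `0⃗`. -/
lemma cubeQ_face {d : ℕ} (m : Fin d → ℤ) {z : (Fin d → Bool) → X} (hz : z ∈ cubeQ d T) :
    (fun ε => itZ T (ndot m ε) (z ε)) ∈ cubeQ d T := by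
  refine cubeQ_map T (Φ := fun z ε => itZ T (ndot m ε) (z ε))
    (continuous_pi fun ε => (continuous_itZ T _).comp (continuous_apply ε)) ?_ hz
  intro x n
  refine subset_closure ⟨x, m + n, ?_⟩
  funext ε
  rw [ndot_add, itZ_add_apply]; rfl

/-- The reflection of the cube `{0,1}^d` exchanging `0⃗` and `ω`. -/
def vflip {d : ℕ} (ω ε : Fin d → Bool) : Fin d → Bool := fun i => xor (ε i) (ω i)

lemma vflip_vflip {d : ℕ} (ω ε : Fin d → Bool) : vflip ω (vflip ω ε) = ε := by
  funext i; simp [vflip]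

lemma vflip_zero {d : ℕ} (ω : Fin d → Bool) : vflip ω (fun _ => false) = ω := by
  funext i; simp [vflip]

lemma ndot_vflip {d : ℕ} (ω ε : Fin d → Bool) (n : Fin d → ℤ) :
    ndot n (vflip ω ε) = ndot (fun i => if ω i then - n i else n i) ε + ndot n ω := by
  unfold ndot
  rw [← Finset.sum_add_distrib]
  refine Finset.sum_congr rfl fun i _ => ?_
  cases hω : ω i <;> cases hε : ε i <;> simp [vflip, hω, hε]

/-- `Q^[d](X)` is invariant under reflections: re-base the cube at the vertex `ω` and reverse the
sides in the directions where `ω` is `1`. -/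
lemma cubeQ_vflip {d : ℕ} (ω : Fin d → Bool) {z : (Fin d → Bool) → X} (hz : z ∈ cubeQ d T) :
    (fun ε => z (vflip ω ε)) ∈ cubeQ d T := by
  refine cubeQ_map T (Φ := fun z ε => z (vflip ω ε))
    (continuous_pi fun ε => continuous_apply _) ?_ hz
  intro x n
  refine subset_closure ⟨itZ T (ndot n ω) x, fun i => if ω i then - n i else n i, ?_⟩
  funext ε
  simp only [cubePt]
  rw [ndot_vflip, itZ_add_apply]

/-- Every nonempty closed invariant set for a family of self-maps of a compact space contains a
minimal one. -/
lemma exists_minimal_closed {Y ι : Type*} [TopologicalSpace Y] [CompactSpace Y]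
    (Φ : ι → Y → Y) (C : Set Y) (hC : IsClosed C) (hne : C.Nonempty)
    (hinv : ∀ i, ∀ y ∈ C, Φ i y ∈ C) :
    ∃ M ⊆ C, IsClosed M ∧ M.Nonempty ∧ (∀ i, ∀ y ∈ M, Φ i y ∈ M) ∧
      ∀ N ⊆ M, IsClosed N → N.Nonempty → (∀ i, ∀ y ∈ N, Φ i y ∈ N) → N = M := by
  obtain ⟨M, hMC, hM⟩ := zorn_superset_nonempty
    {s : Set Y | IsClosed s ∧ s.Nonempty ∧ ∀ i, ∀ y ∈ s, Φ i y ∈ s} (by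
      intro c hc hchain hcne
      refine ⟨⋂₀ c, ⟨isClosed_sInter fun s hs => (hc hs).1, ?_, ?_⟩,
        fun s hs => sInter_subset_of_mem hs⟩
      · have := hcne.to_subtype
        exact IsCompact.nonempty_sInter_of_directed_nonempty_isCompact_isClosed
          (IsChain.directedOn hchain.symm) (fun s hs => (hc hs).2.1)
          (fun s hs => (hc hs).1.isCompact) (fun s hs => (hc hs).1)
      · intro i y hy s hs
        exact (hc hs).2.2 i y (hy s hs)) C ⟨hC, hne, hinv⟩
  refine ⟨M, hMC, hM.prop.1, hM.prop.2.1, hM.prop.2.2, fun N hNM h1 h2 h3 => ?_⟩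
  exact hM.eq_of_subset ⟨h1, h2, h3⟩ hNM

end Basics

/-! ### The enveloping semigroup and minimality of the face group -/

section Ellis

variable {X : Type*} [TopologicalSpace X] (T : X ≃ₜ X)

/-- The Ellis enveloping semigroup of `(X, T)`: the pointwise closure of the iterates of `T`. -/
def EX : Set (X → X) := closure (range fun n : ℤ => itZ T n)

/-- The enveloping semigroup of the face group on `X^{{0,1}^d}`; an element is recorded by its
action on each vertex coordinate. -/
def EF (d : ℕ) : Set ((Fin d → Bool) → X → X) :=
  closure (range fun (n : Fin d → ℤ) ε => itZ T (ndot n ε))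

/-- Pointwise composition on `X^X`-valued families is right topological, so closed subsemigroups
contain idempotents when `X` is compact Hausdorff. -/
lemma exists_coord_idem [CompactSpace X] [T2Space X] {ι : Type*} (s : Set (ι → X → X))
    (hs : IsClosed s) (hne : s.Nonempty)
    (hmul : ∀ p ∈ s, ∀ q ∈ s, (fun i => p i ∘ q i) ∈ s) :
    ∃ m ∈ s, (fun i => m i ∘ m i) = m := by
  let inst : Semigroup (ι → X → X) :=
    { mul := fun p q i => p i ∘ q i
      mul_assoc := fun _ _ _ => rfl }
  refine exists_idempotent_in_compact_subsemigroup (M := ι → X → X) ?_ s hne hs.isCompact hmul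
  intro r
  change Continuous fun p : ι → X → X => fun i => p i ∘ r i
  fun_prop

lemma EX_left (n : ℤ) {p : X → X} (hp : p ∈ EX T) : itZ T n ∘ p ∈ EX T := by
  have hc : Continuous fun q : X → X => itZ T n ∘ q :=
    continuous_pi fun x => (continuous_itZ T n).comp (continuous_apply x)
  refine closure_minimal (t := (fun q : X → X => itZ T n ∘ q) ⁻¹' EX T) ?_
    (isClosed_closure.preimage hc) hp
  rintro _ ⟨m, rfl⟩
  exact subset_closure ⟨n + m, itZ_add T n m⟩

lemma EF_comp {d : ℕ} {p q : (Fin d → Bool) → X → X} (hp : p ∈ EF T d) (hq : q ∈ EF T d) :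
    (fun ε => p ε ∘ q ε) ∈ EF T d := by
  have hc1 : Continuous fun p : (Fin d → Bool) → X → X => fun ε => p ε ∘ q ε := by fun_prop
  refine closure_minimal (t := (fun p : (Fin d → Bool) → X → X => fun ε => p ε ∘ q ε) ⁻¹' EF T d)
    ?_ (isClosed_closure.preimage hc1) hp
  rintro _ ⟨n, rfl⟩
  have hc2 : Continuous fun q : (Fin d → Bool) → X → X => fun ε => itZ T (ndot n ε) ∘ q ε :=
    continuous_pi fun ε => continuous_pi fun x =>
      (continuous_itZ T _).comp ((continuous_apply x).comp (continuous_apply ε))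
  refine closure_minimal
    (t := (fun q : (Fin d → Bool) → X → X => fun ε => itZ T (ndot n ε) ∘ q ε) ⁻¹' EF T d)
    ?_ (isClosed_closure.preimage hc2) hq
  rintro _ ⟨m, rfl⟩
  refine subset_closure ⟨n + m, ?_⟩
  funext ε
  change itZ T (ndot (n + m) ε) = _
  rw [ndot_add, itZ_add]

lemma EF_zero {d : ℕ} [T2Space X] {p : (Fin d → Bool) → X → X} (hp : p ∈ EF T d) :
    p (fun _ => false) = id := by
  refine closure_minimal (t := {p : (Fin d → Bool) → X → X | p (fun _ => false) = id}) ?_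
    (isClosed_eq (continuous_apply _) continuous_const) hp
  rintro _ ⟨m, rfl⟩
  simp [ndot_zero, itZ_zero]

lemma EF_coord {d : ℕ} (ε : Fin d → Bool) {p : (Fin d → Bool) → X → X} (hp : p ∈ EF T d) :
    p ε ∈ EX T := by
  refine closure_minimal (t := (fun p : (Fin d → Bool) → X → X => p ε) ⁻¹' EX T) ?_
    (isClosed_closure.preimage (continuous_apply _)) hp
  rintro _ ⟨m, rfl⟩
  exact subset_closure ⟨_, rfl⟩

/-- Evaluating the enveloping semigroup at a point gives the orbit closure of the point. -/
lemma EF_eval {d : ℕ} (z : (Fin d → Bool) → X) {p : (Fin d → Bool) → X → X} (hp : p ∈ EF T d) :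
    (fun ε => p ε (z ε)) ∈
      closure (range fun (n : Fin d → ℤ) ε => itZ T (ndot n ε) (z ε)) := by
  have hc : Continuous fun p : (Fin d → Bool) → X → X => fun ε => p ε (z ε) := by fun_prop
  refine closure_minimal (t := (fun p : (Fin d → Bool) → X → X => fun ε => p ε (z ε)) ⁻¹'
    closure (range fun (n : Fin d → ℤ) ε => itZ T (ndot n ε) (z ε))) ?_
    (isClosed_closure.preimage hc) hp
  rintro _ ⟨m, rfl⟩
  exact subset_closure ⟨m, rfl⟩

lemma EF_eval_surj {d : ℕ} [CompactSpace X] [T2Space X] (z y : (Fin d → Bool) → X)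
    (hy : y ∈ closure (range fun (n : Fin d → ℤ) ε => itZ T (ndot n ε) (z ε))) :
    ∃ p ∈ EF T d, (fun ε => p ε (z ε)) = y := by
  have hc : Continuous fun p : (Fin d → Bool) → X → X => fun ε => p ε (z ε) := by fun_prop
  have hcl : IsClosed ((fun p : (Fin d → Bool) → X → X => fun ε => p ε (z ε)) '' EF T d) :=
    ((isClosed_closure.isCompact).image hc).isClosed
  refine closure_minimal ?_ hcl hy
  rintro _ ⟨n, rfl⟩
  exact ⟨_, subset_closure ⟨n, rfl⟩, rfl⟩

/-- In a minimal system every point is fixed by some minimal idempotent of the enveloping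
semigroup. -/
lemma exists_min_idem [CompactSpace X] [T2Space X] (hmin : IsMinimalSystem T) (x : X) :
    ∃ u ∈ EX T, u ∘ u = u ∧ u x = x ∧ ∀ v ∈ EX T, v ∘ v = v → v ∘ u = v → u ∘ v = u := by
  obtain ⟨L, hLE, hLcl, hLne, hLinv, hLmin⟩ :=
    exists_minimal_closed (fun (n : ℤ) (p : X → X) => itZ T n ∘ p) (EX T) isClosed_closure
      ⟨_, subset_closure ⟨0, rfl⟩⟩ (fun n p hp => EX_left T n hp)
  have hcr : ∀ l : X → X, Continuous fun p : X → X => p ∘ l := fun l => by fun_prop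
  have hideal : ∀ p ∈ EX T, ∀ l ∈ L, p ∘ l ∈ L := by
    intro p hp l hl
    refine closure_minimal (t := (fun p : X → X => p ∘ l) ⁻¹' L) ?_ (hLcl.preimage (hcr l)) hp
    rintro _ ⟨n, rfl⟩
    exact hLinv n l hl
  have hgen : ∀ l ∈ L, (fun p : X → X => p ∘ l) '' EX T = L := by
    intro l hl
    refine hLmin _ ?_ ((isClosed_closure.isCompact).image (hcr l)).isClosed ?_ ?_
    · rintro _ ⟨p, hp, rfl⟩
      exact hideal p hp l hl
    · exact ⟨_, _, hLE hl, rfl⟩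
    · rintro n _ ⟨p, hp, rfl⟩
      exact ⟨_, EX_left T n hp, rfl⟩
  -- Some element of the minimal left ideal `L` fixes `x`, since `L x` is closed and invariant.
  have hfix : ∃ l ∈ L, l x = x := by
    obtain ⟨l, hl⟩ := hLne
    have hcl : IsClosed ((fun p : X → X => p x) '' L) :=
      (hLcl.isCompact.image (continuous_apply x)).isClosed
    have : closure (range fun n : ℤ => itZ T n (l x)) ⊆ (fun p : X → X => p x) '' L := by
      refine closure_minimal ?_ hcl
      rintro _ ⟨n, rfl⟩
      exact ⟨_, hLinv n l hl, rfl⟩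
    obtain ⟨p, hp, hpx⟩ := this (hmin (l x) x)
    exact ⟨p, hp, hpx⟩
  obtain ⟨u', ⟨hu'L, hu'x⟩, hidem⟩ := exists_coord_idem (ι := Unit)
    {p : Unit → X → X | p () ∈ L ∧ p () x = x}
    ((hLcl.preimage (continuous_apply ())).inter
      (isClosed_eq ((continuous_apply x).comp (continuous_apply ())) continuous_const))
    (by obtain ⟨l, hl, hlx⟩ := hfix; exact ⟨fun _ => l, hl, hlx⟩)
    (by
      rintro p ⟨hp, hpx⟩ q ⟨hq, hqx⟩
      exact ⟨hideal _ (hLE hp) _ hq, by simp [hqx, hpx]⟩)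
  refine ⟨u' (), hLE hu'L, congrFun hidem (), hu'x, fun v hv hvv hvu => ?_⟩
  have hvL : v ∈ L := hvu ▸ hideal v hv _ hu'L
  obtain ⟨s, -, hs⟩ : u' () ∈ (fun p : X → X => p ∘ v) '' EX T := by rw [hgen v hvL]; exact hu'L
  change s ∘ v = u' () at hs
  rw [← hs, Function.comp_assoc, hvv]

open Classical in
/-- An idempotent `u` of the enveloping semigroup of `T`, acting on all coordinates except `0⃗`,
lies in the enveloping semigroup of the face group: it is the product over `i` of the limits `u`
taken along the `i`-th face transformation, and coordinate `ε` receives `u` once for each `i` with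
`ε i = 1`. -/
lemma EF_const {d : ℕ} {u : X → X} (hu : u ∈ EX T) (huu : u ∘ u = u) :
    (fun ε : Fin d → Bool => if ε = (fun _ => false) then id else u) ∈ EF T d := by
  have hone : ∀ i : Fin d, (fun ε : Fin d → Bool => if ε i then u else id) ∈ EF T d := by
    intro i
    have hc : Continuous fun p : X → X => fun ε : Fin d → Bool => if ε i then p else id := by
      refine continuous_pi fun ε => ?_
      split_ifs
      · exact continuous_id
      · exact continuous_const
    refine closure_minimal
      (t := (fun p : X → X => fun ε : Fin d → Bool => if ε i then p else id) ⁻¹' EF T d) ?_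
      (isClosed_closure.preimage hc) hu
    rintro _ ⟨n, rfl⟩
    refine subset_closure ⟨Pi.single i n, ?_⟩
    funext ε
    have : ndot (Pi.single i n) ε = if ε i then n else 0 := by
      unfold ndot
      rw [Finset.sum_eq_single i]
      · simp
      · intro j _ hj; simp [hj]
      · simp
    simp only [this]
    split_ifs <;> simp [itZ_zero]
  have hfin : ∀ s : Finset (Fin d),
      (fun ε : Fin d → Bool => if ∃ i ∈ s, ε i = true then u else id) ∈ EF T d := by
    intro s
    induction s using Finset.induction_on with
    | empty =>
      refine subset_closure ⟨0, ?_⟩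
      funext ε
      simp [ndot, itZ_zero]
    | insert i s _ ih =>
      convert! EF_comp T (hone i) ih using 1
      funext ε
      by_cases h1 : ε i = true <;> by_cases h2 : ∃ j ∈ s, ε j = true <;> simp [h1, h2, huu]
  convert! hfin Finset.univ using 1
  funext ε
  by_cases h : ε = fun _ => false
  · simp [h]
  · have : ∃ i, ε i = true := by
      by_contra! hcon
      exact h (funext fun i => by simpa using hcon i)
    simp [h, this]

/-- For every `x`, the face-group orbit closure of the constant point `(x,…,x)` is minimal: the
constant point lies in the orbit closure of each of its members. -/
lemma face_minimal {d : ℕ} [CompactSpace X] [T2Space X] (hmin : IsMinimalSystem T) (x : X)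
    {z : (Fin d → Bool) → X} (hz : z ∈ closure (range fun n : Fin d → ℤ => cubePt T n x)) :
    (fun _ => x) ∈ closure (range fun (n : Fin d → ℤ) ε => itZ T (ndot n ε) (z ε)) := by
  classical
  obtain ⟨p, hp, rfl⟩ := EF_eval_surj T (fun _ => x) z hz
  obtain ⟨u, hu, huu, hux, humin⟩ := exists_min_idem T hmin x
  set U : (Fin d → Bool) → X → X := fun ε => if ε = (fun _ => false) then id else u with hU
  have hUE : U ∈ EF T d := EF_const T hu huu
  have hUU : ∀ ε, U ε ∘ U ε = U ε := by
    intro ε; simp only [hU]; split_ifs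
    · rfl
    · exact huu
  have hUx : ∀ ε, U ε x = x := by
    intro ε; simp only [hU]; split_ifs
    · rfl
    · exact hux
  have hc : Continuous fun q : (Fin d → Bool) → X → X => fun ε => q ε ∘ (p ε ∘ U ε) := by fun_prop
  obtain ⟨v, ⟨q, hq, rfl⟩, hvv⟩ := exists_coord_idem
    ((fun q : (Fin d → Bool) → X → X => fun ε => q ε ∘ (p ε ∘ U ε)) '' EF T d)
    ((isClosed_closure.isCompact).image hc).isClosed ⟨_, _, hp, rfl⟩ (by
      rintro _ ⟨q, hq, rfl⟩ _ ⟨q', hq', rfl⟩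
      exact ⟨_, EF_comp T (EF_comp T hq (EF_comp T hp hUE)) hq', rfl⟩)
  -- Coordinatewise minimality of `U` gives `U v = U`, so `U q` sends `p (x,…,x)` back to `(x,…,x)`.
  have hUv : ∀ ε, U ε ∘ (q ε ∘ (p ε ∘ U ε)) = U ε := by
    intro ε
    have hvE := EF_comp T hq (EF_comp T hp hUE)
    by_cases h : ε = fun _ => false
    · have := EF_zero T hvE
      subst h
      rw [this]; rfl
    · have hUε : U ε = u := by simp [hU, h]
      rw [hUε]
      refine humin _ ?_ ?_ ?_
      · have := EF_coord T ε hvE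
        simpa only [hUε] using this
      · have := congrFun hvv ε
        simpa only [hUε] using this
      · rw [Function.comp_assoc, Function.comp_assoc, huu]
  have := EF_eval T (fun ε => p ε x) (EF_comp T hUE hq)
  convert! this using 1
  funext ε
  have h2 := congrFun (hUv ε) x
  simp only [Function.comp_apply, hUx] at h2 ⊢
  exact h2.symm

end Ellis

/-! ### Fibres of the cubespace over generic points -/

section Generic

variable {X : Type*} [MetricSpace X] [CompactSpace X] (T : X ≃ₜ X)

/-- For a residual set of `x`, every point of `Q^[d](X)` with `0⃗`-coordinate `x` is a limit of
cubes based at `x` itself. -/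
lemma dense_generic (d : ℕ) :
    Dense {x : X | ∀ z ∈ cubeQ d T, z (fun _ => false) = x →
      z ∈ closure (range fun n : Fin d → ℤ => cubePt T n x)} := by
  let b := TopologicalSpace.countableBasis ((Fin d → Bool) → X)
  have hb := TopologicalSpace.isBasis_countableBasis ((Fin d → Bool) → X)
  let O : Set ((Fin d → Bool) → X) → Set X := fun B => ⋃ n : Fin d → ℤ, cubePt T n ⁻¹' B
  have hO : ∀ B ∈ b, IsOpen (O B) := by
    intro B hB
    refine isOpen_iUnion fun n => (hb.isOpen hB).preimage ?_
    exact continuous_pi fun ε => continuous_itZ T _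
  have hdense : Dense (⋂ B : b, (O B ∪ (closure (O B))ᶜ)) := by
    have : Countable b := (TopologicalSpace.countable_countableBasis _).to_subtype
    refine dense_iInter_of_isOpen (fun B => (hO B B.2).union isClosed_closure.isOpen_compl) ?_
    intro B x
    by_cases hx : x ∈ closure (O B)
    · exact closure_mono subset_union_left hx
    · exact subset_closure (Or.inr hx)
  refine hdense.mono ?_
  rintro x hx z hz rfl
  rw [hb.mem_closure_iff]
  intro B hB hzB
  -- Cubes near `z` have base points near `z 0⃗`, so `z 0⃗` is at least a limit of base points of cubes
  -- in `B`; genericity upgrades this to membership.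
  have hcl : z (fun _ => false) ∈ closure (O B) := by
    rw [mem_closure_iff]
    intro V hV hzV
    have hev : Continuous fun y : (Fin d → Bool) → X => y (fun _ => false) := continuous_apply _
    obtain ⟨_, ⟨h1, h2⟩, x', n, rfl⟩ := mem_closure_iff.1 hz
      (B ∩ (fun y : (Fin d → Bool) → X => y (fun _ => false)) ⁻¹' V)
      ((hb.isOpen hB).inter (hV.preimage hev)) ⟨hzB, hzV⟩
    refine ⟨x', ?_, mem_iUnion.2 ⟨n, h1⟩⟩
    simpa [ndot_zero, itZ_zero] using h2
  rcases mem_iInter.1 hx ⟨B, hB⟩ with h | h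
  · obtain ⟨n, hn⟩ := mem_iUnion.1 h
    exact ⟨_, hn, n, rfl⟩
  · exact absurd hcl h

/-- Pairs `(a, b)` that occur as the `0⃗`-coordinates of two points of `Q^[d](X)` agreeing at all
other vertices. -/
def cubePair (d : ℕ) : Set (X × X) :=
  {q | ∃ z ∈ cubeQ d T, ∃ z' ∈ cubeQ d T, (∀ ε, ε ≠ (fun _ => false) → z ε = z' ε) ∧
    z (fun _ => false) = q.1 ∧ z' (fun _ => false) = q.2}

lemma isClosed_cubePair (d : ℕ) : IsClosed (cubePair T d) := by
  have hcl : IsClosed {w : ((Fin d → Bool) → X) × ((Fin d → Bool) → X) |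
      w.1 ∈ cubeQ d T ∧ w.2 ∈ cubeQ d T ∧ ∀ ε, ε ≠ (fun _ => false) → w.1 ε = w.2 ε} := by
    refine (isClosed_closure.preimage continuous_fst).inter
      ((isClosed_closure.preimage continuous_snd).inter ?_)
    have : {w : ((Fin d → Bool) → X) × ((Fin d → Bool) → X) |
        ∀ ε, ε ≠ (fun _ => false) → w.1 ε = w.2 ε} =
        ⋂ ε, ⋂ (_ : ε ≠ (fun _ => false)), {w | w.1 ε = w.2 ε} := by ext w; simp
    change IsClosed {w : ((Fin d → Bool) → X) × ((Fin d → Bool) → X) |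
        ∀ ε, ε ≠ (fun _ => false) → w.1 ε = w.2 ε}
    rw [this]
    exact isClosed_iInter fun ε => isClosed_iInter fun _ =>
      isClosed_eq (by fun_prop) (by fun_prop)
  have himg := (hcl.isCompact.image (f := fun w => (w.1 (fun _ => false), w.2 (fun _ => false)))
    (by fun_prop)).isClosed
  convert! himg using 1
  ext ⟨a, b⟩
  constructor
  · rintro ⟨z, hz, z', hz', h, rfl, rfl⟩
    exact ⟨(z, z'), ⟨hz, hz', h⟩, rfl⟩
  · rintro ⟨⟨z, z'⟩, ⟨hz, hz', h⟩, heq⟩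
    exact ⟨z, hz, z', hz', h, congrArg Prod.fst heq, congrArg Prod.snd heq⟩

omit [CompactSpace X] in
lemma cubePair_inv {d : ℕ} (k : ℤ) {a b : X} (h : (a, b) ∈ cubePair T d) :
    (itZ T k a, itZ T k b) ∈ cubePair T d := by
  obtain ⟨z, hz, z', hz', h, rfl, rfl⟩ := h
  exact ⟨_, cubeQ_diag T k hz, _, cubeQ_diag T k hz',
    fun ε hε => congrArg (itZ T k) (h ε hε), rfl, rfl⟩

/-- Limits of the approximating cubes in the definition of `RP^[d]` form such a pair. -/
lemma cubePair_of_RP {d : ℕ} {a b : X} (h : RP d T a b) : (a, b) ∈ cubePair T d := by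
  choose x y n hx hy hxy using fun k : ℕ => h (1 / ((k : ℝ) + 1)) Nat.one_div_pos_of_nat
  obtain ⟨⟨z, z'⟩, -, φ, hφ, hlim⟩ := isCompact_univ.tendsto_subseq
    (x := fun k => (cubePt T (n k) (x k), cubePt T (n k) (y k))) (fun _ => mem_univ _)
  have hδ : Filter.Tendsto (fun k => 1 / (((φ k : ℕ) : ℝ) + 1)) Filter.atTop (𝓝 0) :=
    tendsto_one_div_add_atTop_nhds_zero_nat.comp hφ.tendsto_atTop
  have h1 : ∀ ε, Filter.Tendsto (fun k => cubePt T (n (φ k)) (x (φ k)) ε) Filter.atTop (𝓝 (z ε)) :=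
    fun ε => (tendsto_pi_nhds.1 ((continuous_fst.tendsto _).comp hlim)) ε
  have h2 : ∀ ε, Filter.Tendsto (fun k => cubePt T (n (φ k)) (y (φ k)) ε) Filter.atTop (𝓝 (z' ε)) :=
    fun ε => (tendsto_pi_nhds.1 ((continuous_snd.tendsto _).comp hlim)) ε
  refine ⟨z, ?_, z', ?_, ?_, ?_, ?_⟩
  · exact isClosed_closure.mem_of_tendsto (tendsto_pi_nhds.2 h1)
      (Filter.Eventually.of_forall fun k => cubePt_mem T _ _)
  · exact isClosed_closure.mem_of_tendsto (tendsto_pi_nhds.2 h2)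
      (Filter.Eventually.of_forall fun k => cubePt_mem T _ _)
  · intro ε hε
    have hd := (h1 ε).dist (h2 ε)
    refine dist_eq_zero.1 (tendsto_nhds_unique hd ?_)
    exact squeeze_zero (fun _ => dist_nonneg) (fun k => (hxy (φ k) ε hε).le) hδ
  · refine tendsto_nhds_unique (h1 _) ?_
    rw [tendsto_iff_dist_tendsto_zero]
    refine squeeze_zero (fun _ => dist_nonneg) (fun k => ?_) hδ
    simpa [cubePt, ndot_zero, itZ_zero, dist_comm] using (hx (φ k)).le
  · refine tendsto_nhds_unique (h2 _) ?_
    rw [tendsto_iff_dist_tendsto_zero]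
    refine squeeze_zero (fun _ => dist_nonneg) (fun k => ?_) hδ
    simpa [cubePt, ndot_zero, itZ_zero, dist_comm] using (hy (φ k)).le

/-- Over a generic point `a`, the base vertex of any cube at `a` may be replaced by any `b` paired
with `a`: the face group moves the common vertices of the two witnesses back to `a`, which yields
`(b, a, …, a) ∈ Q^[d](X)`, and then moves this point to the required cube. -/
lemma replace_generic {d : ℕ} (hmin : IsMinimalSystem T) {a b : X}
    (ha : ∀ z ∈ cubeQ d T, z (fun _ => false) = a →
      z ∈ closure (range fun n : Fin d → ℤ => cubePt T n a))
    (hab : (a, b) ∈ cubePair T d) (n : Fin d → ℤ) :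
    (fun ε => if ε = (fun _ => false) then b else itZ T (ndot n ε) a) ∈ cubeQ d T := by
  obtain ⟨z, hz, z', hz', h, rfl, rfl⟩ := hab
  have h1 := face_minimal T hmin _ (ha z hz rfl)
  have h2 : (fun ε => if ε = (fun _ => false) then z' (fun _ => false) else z (fun _ => false)) ∈
      cubeQ d T := by
    have hc : Continuous fun y : (Fin d → Bool) → X =>
        fun ε => if ε = (fun _ => false) then z' (fun _ => false) else y ε := by
      refine continuous_pi fun ε => ?_
      split_ifs
      · exact continuous_const
      · exact continuous_apply ε
    refine closure_minimal (t := (fun y : (Fin d → Bool) → X =>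
        fun ε => if ε = (fun _ => false) then z' (fun _ => false) else y ε) ⁻¹' cubeQ d T) ?_
      (isClosed_closure.preimage hc) h1
    rintro _ ⟨m, rfl⟩
    have := cubeQ_face T m hz'
    rw [mem_preimage]
    convert! this using 1
    funext ε
    split_ifs with hε
    · simp [hε, ndot_zero, itZ_zero]
    · exact congrArg (itZ T (ndot m ε)) (h ε hε)
  convert! cubeQ_face T n h2 using 1
  funext ε
  split_ifs with hε
  · simp [hε, ndot_zero, itZ_zero]
  · rfl

end Generic

/-! ### Semi-openness of factor maps from minimal systems -/

section SemiOpen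

variable {X Y : Type*} [MetricSpace X] [CompactSpace X] [TopologicalSpace Y]

/-- Let `N` be a compact minimal set for an action `S` of `ℤ` on `Y` and let `π : Y → X` be an
equivariant map to the minimal system `(X, T)`. The image of a relatively open nonempty piece of
`N` has nonempty interior: countably many translates of it cover `X`. -/
lemma semiopen [CompactSpace Y] [T2Space Y] (T : X ≃ₜ X) (hmin : IsMinimalSystem T)
    (S : Y ≃ₜ Y) (π : Y → X) (hπ : Continuous π) (hequiv : ∀ k y, π (itZ S k y) = itZ T k (π y))
    (N : Set Y) (hN : IsClosed N) (hinv : ∀ k : ℤ, ∀ y ∈ N, itZ S k y ∈ N)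
    (hNmin : ∀ M ⊆ N, IsClosed M → M.Nonempty → (∀ k : ℤ, ∀ y ∈ M, itZ S k y ∈ M) → M = N)
    {w : Y} (hw : w ∈ N) {U : Set Y} (hU : U ∈ 𝓝 w) :
    (interior (π '' (N ∩ U))).Nonempty := by
  obtain ⟨K, hK, hKcl, hKU⟩ := exists_mem_nhds_isClosed_subset hU
  have hPcl : IsClosed (π '' (N ∩ K)) := ((hN.inter hKcl).isCompact.image hπ).isClosed
  have : Nonempty X := ⟨π w⟩
  have horb : ∀ y ∈ N, ∃ k : ℤ, itZ S k y ∈ K := by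
    intro y hy
    have hsub : closure (range fun k : ℤ => itZ S k y) ⊆ N :=
      closure_minimal (by rintro _ ⟨k, rfl⟩; exact hinv k y hy) hN
    have heq := hNmin _ hsub isClosed_closure ⟨_, subset_closure ⟨0, rfl⟩⟩ (by
      intro k v hv
      refine closure_minimal (t := itZ S k ⁻¹' closure (range fun k : ℤ => itZ S k y)) ?_
        (isClosed_closure.preimage (continuous_itZ S k)) hv
      rintro _ ⟨m, rfl⟩
      exact subset_closure ⟨k + m, itZ_add_apply S k m y⟩)
    obtain ⟨_, hv, k, rfl⟩ := mem_closure_iff_nhds.1 (heq.symm ▸ hw) K hK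
    exact ⟨k, hv⟩
  have hsurj : ∀ x : X, ∃ y ∈ N, π y = x := by
    intro x
    have : closure (range fun k : ℤ => itZ T k (π w)) ⊆ π '' N := by
      refine closure_minimal ?_ (hN.isCompact.image hπ).isClosed
      rintro _ ⟨k, rfl⟩
      exact ⟨_, hinv k w hw, hequiv k w⟩
    exact this (hmin (π w) x)
  obtain ⟨k, hk⟩ := nonempty_interior_of_iUnion_of_closed
    (f := fun k : ℤ => itZ T k ⁻¹' (π '' (N ∩ K)))
    (fun k => hPcl.preimage (continuous_itZ T k)) (by
      refine eq_univ_of_forall fun x => ?_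
      obtain ⟨y, hy, rfl⟩ := hsurj x
      obtain ⟨k, hk⟩ := horb y hy
      exact mem_iUnion.2 ⟨k, _, ⟨hinv k y hy, hk⟩, hequiv k y⟩)
  obtain ⟨x, hx⟩ := hk
  refine ⟨itZ T k x, mem_interior.2 ⟨itZ T (-k) ⁻¹' interior (itZ T k ⁻¹' (π '' (N ∩ K))), ?_,
    isOpen_interior.preimage (continuous_itZ T _), ?_⟩⟩
  · intro v hv
    have h1 : itZ T k (itZ T (-k) v) ∈ π '' (N ∩ K) :=
      interior_subset (s := itZ T k ⁻¹' (π '' (N ∩ K))) hv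
    rw [itZ_comm, itZ_neg_cancel] at h1
    exact image_mono (inter_subset_inter_right N hKU) h1
  · rw [mem_preimage, itZ_neg_cancel]; exact hx

end SemiOpen

/-- Let `xv ∈ Q^[d](X)` and let `yv` agree with `xv` except at the
coordinate `ω`, where `(xv ω, yv ω) ∈ RP^[∞](X)`. If `yv` is a minimal point of the
diagonal system `(X^{{0,1}^d}, T^[d])`, then `yv ∈ Q^[d](X)`. -/
theorem statement10 {X : Type*} [MetricSpace X] [CompactSpace X] (T : X ≃ₜ X)
    (hmin : IsMinimalSystem T) (d : ℕ) (hd : 1 ≤ d)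
    (ω : Fin d → Bool) (xv yv : (Fin d → Bool) → X)
    (hxv : xv ∈ cubeQ d T)
    (hagree : ∀ ε : Fin d → Bool, ε ≠ ω → yv ε = xv ε)
    (hrp : RPinf T (xv ω) (yv ω))
    (hminpt : IsMinimalPoint
      (Homeomorph.piCongrRight fun _ : Fin d → Bool => T) yv) :
    yv ∈ cubeQ d T := by
  classical
  let S : X × ((Fin d → Bool) → X) ≃ₜ X × ((Fin d → Bool) → X) :=
    T.prodCongr (Homeomorph.piCongrRight fun _ : Fin d → Bool => T)
  have hS : ∀ (k : ℤ) (a : X) (y : (Fin d → Bool) → X),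
      itZ S k (a, y) = (itZ T k a, fun ε => itZ T k (y ε)) := by
    intro k
    induction k using Int.induction_on with
    | zero => intro a y; simp [itZ_zero]
    | succ n ih =>
      intro a y
      simp only [itZ_add_apply, itZ_one]
      exact ih _ _
    | pred n ih =>
      intro a y
      simp only [sub_eq_add_neg, itZ_add_apply, itZ_neg_one]
      exact ih _ _
  -- `C` is a closed invariant set containing `(xv ω, yv)`.
  let C : Set (X × ((Fin d → Bool) → X)) :=
    {q | Function.update q.2 ω q.1 ∈ cubeQ d T ∧ (q.1, q.2 ω) ∈ cubePair T d}
  have hCcl : IsClosed C :=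
    (isClosed_closure.preimage
      (f := fun q : X × ((Fin d → Bool) → X) => Function.update q.2 ω q.1)
      (continuous_snd.update ω continuous_fst)).inter
      ((isClosed_cubePair T d).preimage
        (f := fun q : X × ((Fin d → Bool) → X) => (q.1, q.2 ω)) (by fun_prop))
  have hCinv : ∀ k : ℤ, ∀ q ∈ C, itZ S k q ∈ C := by
    rintro k ⟨a, y⟩ ⟨h1, h2⟩
    rw [hS]
    refine ⟨?_, cubePair_inv T k h2⟩
    convert! cubeQ_diag T k h1 using 1
    funext ε
    by_cases h : ε = ω
    · subst h; simp
    · simp [h]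
  have hCmem : (xv ω, yv) ∈ C := by
    refine ⟨?_, cubePair_of_RP T (hrp d hd)⟩
    convert! hxv using 1
    funext ε
    by_cases h : ε = ω
    · subst h; simp
    · simp [h, hagree ε h]
  let D : Set (X × ((Fin d → Bool) → X)) :=
    C ∩ Prod.snd ⁻¹' closure (range fun n : ℤ =>
      itZ (Homeomorph.piCongrRight fun _ : Fin d → Bool => T) n yv)
  have hDinv : ∀ k : ℤ, ∀ q ∈ D, itZ S k q ∈ D := by
    rintro k ⟨a, y⟩ ⟨h1, h2⟩
    refine ⟨hCinv k _ h1, ?_⟩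
    rw [mem_preimage, hS]
    have hc := continuous_itZ (Homeomorph.piCongrRight fun _ : Fin d → Bool => T) k
    have := closure_minimal (t := itZ (Homeomorph.piCongrRight fun _ : Fin d → Bool => T) k ⁻¹'
      closure (range fun n : ℤ => itZ (Homeomorph.piCongrRight fun _ : Fin d → Bool => T) n yv)) (by
        rintro _ ⟨m, rfl⟩
        exact subset_closure ⟨k + m, itZ_add_apply _ k m yv⟩) (isClosed_closure.preimage hc) h2
    rw [mem_preimage, itZ_pi] at this
    exact this
  obtain ⟨N, hND, hNcl, ⟨⟨a₁, y₁⟩, hN₁⟩, hNinv, hNmin⟩ := exists_minimal_closed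
    (fun k : ℤ => itZ S k) D (hCcl.inter (isClosed_closure.preimage continuous_snd))
    ⟨(xv ω, yv), hCmem, subset_closure ⟨0, by simp [itZ_zero]⟩⟩ hDinv
  -- Minimality of `yv` lets the minimal set `N` be reached with second coordinate `yv`.
  obtain ⟨a, haN⟩ : ∃ a, (a, yv) ∈ N := by
    have hy : yv ∈ closure (range fun n : ℤ =>
        itZ (Homeomorph.piCongrRight fun _ : Fin d → Bool => T) n y₁) := by
      rw [hminpt y₁ (hND hN₁).2]
      exact subset_closure ⟨0, by simp [itZ_zero]⟩
    have hsub := closure_minimal (t := Prod.snd '' N) (by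
      rintro _ ⟨k, rfl⟩
      refine ⟨_, hNinv k _ hN₁, ?_⟩
      simp only [hS, itZ_pi]) (hNcl.isCompact.image continuous_snd).isClosed hy
    obtain ⟨⟨a, y⟩, h, rfl⟩ := hsub
    exact ⟨a, h⟩
  suffices h : (fun ε => yv (vflip ω ε)) ∈ cubeQ d T by
    have h' := cubeQ_vflip T ω h
    simpa only [vflip_vflip] using h'
  refine isClosed_closure.closure_subset (Metric.mem_closure_iff.2 fun δ hδ => ?_)
  obtain ⟨α₀, hα₀⟩ := semiopen T hmin S Prod.fst continuous_fst
    (fun k q => by rw [hS]) N hNcl hNinv hNmin haN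
    (Metric.ball_mem_nhds (a, yv) (half_pos hδ))
  obtain ⟨⟨β, y₀⟩, ⟨hy₀N, hy₀⟩, hαeq⟩ := interior_subset hα₀
  obtain rfl : α₀ = β := hαeq.symm
  have hy₀d : dist y₀ yv < δ / 2 :=
    lt_of_le_of_lt (le_max_right _ _) (Metric.mem_ball.1 hy₀)
  -- `z` is a point of `Q^[d](X)` close to the target off `0⃗`, based in the interior of the
  -- projection; hence so is a cube with a generic base point `α` in that interior.
  set z : (Fin d → Bool) → X := fun ε => Function.update y₀ ω α₀ (vflip ω ε) with hz
  have hzQ : z ∈ cubeQ d T := cubeQ_vflip T ω (hND hy₀N).1.1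
  have hz0 : z (fun _ => false) = α₀ := by simp [hz, vflip_zero]
  obtain ⟨_, ⟨hb, hO⟩, x', n, rfl⟩ := mem_closure_iff.1 hzQ
    (Metric.ball z (δ / 2) ∩ (fun y => y (fun _ => false)) ⁻¹' interior (Prod.fst '' (N ∩
      Metric.ball (a, yv) (δ / 2))))
    (Metric.isOpen_ball.inter (isOpen_interior.preimage (continuous_apply _)))
    ⟨Metric.mem_ball_self (half_pos hδ), by rw [mem_preimage, hz0]; exact hα₀⟩
  have hO' : x' ∈ interior (Prod.fst '' (N ∩ Metric.ball (a, yv) (δ / 2))) := by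
    simpa [ndot_zero, itZ_zero] using hO
  obtain ⟨α, hαg, hαb, hαO⟩ := (dense_generic T d).exists_mem_open
    (((Metric.isOpen_ball (x := z) (ε := δ / 2)).preimage
      (continuous_pi fun ε => continuous_itZ T (ndot n ε))).inter
      (isOpen_interior (s := Prod.fst '' (N ∩ Metric.ball (a, yv) (δ / 2))))) ⟨x', hb, hO'⟩
  obtain ⟨⟨β', y₂⟩, ⟨hy₂N, hy₂⟩, hβ'⟩ := interior_subset hαO
  obtain rfl : α = β' := hβ'.symm
  have hy₂d : dist y₂ yv < δ / 2 :=
    lt_of_le_of_lt (le_max_right _ _) (Metric.mem_ball.1 hy₂)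
  refine ⟨_, replace_generic T hmin hαg (hND hy₂N).1.2 n, ?_⟩
  rw [dist_pi_lt_iff hδ]
  intro ε
  split_ifs with hε
  · rw [hε, vflip_zero, dist_comm]
    exact (dist_le_pi_dist y₂ yv ω).trans_lt (hy₂d.trans (half_lt_self hδ))
  · have h1 : z ε = y₀ (vflip ω ε) := by
      have : vflip ω ε ≠ ω := by
        intro h
        apply hε
        rw [← vflip_vflip ω ε, h]
        funext i; simp [vflip]
      simp [hz, this]
    have h2 : dist (itZ T (ndot n ε) α) (y₀ (vflip ω ε)) < δ / 2 :=
      h1 ▸ (dist_le_pi_dist _ z ε).trans_lt (Metric.mem_ball.1 hαb)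
    have h3 := (dist_le_pi_dist y₀ yv (vflip ω ε)).trans_lt hy₀d
    rw [dist_comm]
    calc _ ≤ _ := dist_triangle _ (y₀ (vflip ω ε)) _
      _ < δ / 2 + δ / 2 := add_lt_add h2 h3
      _ = δ := add_halves δ
end
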